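/- arXiv:1012.5613 — 2 statements merged into one kernel-verified Lean document; each statement's English description precedes it below -/
import Mathlib

section
/- With j as above and k ∈ ℕ⁺, for every θ ∈ S¹ one has j(kT₀, θ) = Σ_{j=0}^{k−1} j(T₀, σ_j), where σ₀, …, σ_{k−1} are the k distinct k-th roots of θ in ℂ. -/
/-- Eigenfunctions of `ℒ_{σ,T} y = −ÿ − A(t) y` with eigenvalue `μ`, subject to the
twisted periodicity condition `y(t+T) = σ y(t)`. -/
def twistedEigSet (N : ℕ) (A : ℝ → Matrix (Fin N) (Fin N) ℝ) (T : ℝ) (σ : ℂ)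
    (μ : ℝ) : Set (ℝ → (Fin N → ℂ)) :=
  {y | ContDiff ℝ 2 y ∧ (∀ t, y (t + T) = σ • y t) ∧
    ∀ t, -(deriv (deriv y) t) - ((A t).map (Complex.ofReal)).mulVec (y t)
      = (μ : ℂ) • y t}

/-- The eigenspace of `ℒ_{σ,T}` for the eigenvalue `μ`. -/
noncomputable def twistedEigSpace (N : ℕ) (A : ℝ → Matrix (Fin N) (Fin N) ℝ)
    (T : ℝ) (σ : ℂ) (μ : ℝ) : Submodule ℂ (ℝ → (Fin N → ℂ)) :=
  Submodule.span ℂ (twistedEigSet N A T σ μ)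

/-- `j(T,σ)`: the number of negative eigenvalues of `ℒ_{σ,T}`, counted with
multiplicity. -/
noncomputable def twistedNegCount (N : ℕ) (A : ℝ → Matrix (Fin N) (Fin N) ℝ)
    (T : ℝ) (σ : ℂ) : ℕ :=
  ∑ᶠ (μ : ℝ) (_ : μ < 0), Module.finrank ℂ (twistedEigSpace N A T σ μ)

theorem twistedEigSpace_mem_iff {N : ℕ} {A : ℝ → Matrix (Fin N) (Fin N) ℝ} {T : ℝ} {σ : ℂ}
    {μ : ℝ} {y : ℝ → (Fin N → ℂ)} :
    y ∈ twistedEigSpace N A T σ μ ↔ y ∈ twistedEigSet N A T σ μ := by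
  refine ⟨fun h => ?_, fun h => Submodule.subset_span h⟩
  induction h using Submodule.span_induction with
  | mem x h => exact h
  | zero =>
    refine ⟨contDiff_const, by simp, fun t => ?_⟩
    have : deriv (0 : ℝ → Fin N → ℂ) = 0 := by ext1 t; simp
    rw [this, this]
    simp
  | add x y _ _ hx hy =>
    obtain ⟨hx1, hx2, hx3⟩ := hx
    obtain ⟨hy1, hy2, hy3⟩ := hy
    refine ⟨hx1.add hy1, fun t => by simp [hx2, hy2], fun t => ?_⟩
    have h1 : deriv (x + y) = deriv x + deriv y := by
      ext1 t
      exact deriv_add (hx1.differentiable (by norm_num) t) (hy1.differentiable (by norm_num) t)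
    have h2 : deriv (deriv x + deriv y) t = deriv (deriv x) t + deriv (deriv y) t :=
      deriv_add (hx1.differentiable_deriv_two t) (hy1.differentiable_deriv_two t)
    rw [h1, h2, Pi.add_apply, Matrix.mulVec_add, smul_add, ← hx3, ← hy3]
    abel
  | smul c x _ hx =>
    obtain ⟨hx1, hx2, hx3⟩ := hx
    refine ⟨contDiff_const.smul hx1, fun t => by simp [hx2, smul_comm c σ], fun t => ?_⟩
    have h1 : deriv (c • x) = c • deriv x := by
      ext1 t
      exact deriv_const_smul c (hx1.differentiable (by norm_num) t)
    have h2 : deriv (c • deriv x) t = c • deriv (deriv x) t :=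
      deriv_const_smul c (hx1.differentiable_deriv_two t)
    rw [h1, h2, Pi.smul_apply, Matrix.mulVec_smul, smul_comm _ c, ← hx3, smul_sub, smul_neg]

open Polynomial in
theorem Module.End.finrank_eq_sum_eigenspace_of_pow_eq {V : Type*} [AddCommGroup V] [Module ℂ V]
    [FiniteDimensional ℂ V] (S : Module.End ℂ V) {k : ℕ} (hk : 0 < k) {θ : ℂ} (hθ : θ ≠ 0)
    (hS : S ^ k = θ • 1) :
    Module.finrank ℂ V =
      ∑ σ ∈ ((X : ℂ[X]) ^ k - C θ).roots.toFinset, Module.finrank ℂ (S.eigenspace σ) := by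
  set R := ((X : ℂ[X]) ^ k - C θ).roots.toFinset with hR
  have hsep : ((X : ℂ[X]) ^ k - C θ).Separable :=
    separable_X_pow_sub_C θ (by exact_mod_cast hk.ne') hθ
  have haeval : aeval S ((X : ℂ[X]) ^ k - C θ) = 0 := by
    simp [hS, Algebra.algebraMap_eq_smul_one]
  have hss : S.IsSemisimple :=
    Module.End.isSemisimple_of_squarefree_aeval_eq_zero hsep.squarefree haeval
  have htop : ⨆ σ : ℂ, S.eigenspace σ = ⊤ := hss.iSup_eigenspace_eq_top
  have hbot : ∀ σ, σ ∉ R → S.eigenspace σ = ⊥ := by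
    intro σ hσ
    rw [Submodule.eq_bot_iff]
    intro v hv
    have hv' : S v = σ • v := Module.End.mem_eigenspace_iff.1 hv
    have hpow : ∀ n : ℕ, (S ^ n) v = σ ^ n • v := by
      intro n
      induction n with
      | zero => simp
      | succ n ih => rw [pow_succ', Module.End.mul_apply, ih, map_smul, hv', smul_smul, pow_succ]
    have h1 := hpow k
    rw [hS] at h1
    have h2 : (σ ^ k - θ) • v = 0 := by
      rw [sub_smul, ← h1]; simp
    rcases smul_eq_zero.1 h2 with h | h
    · refine absurd ?_ hσ
      rw [hR, Multiset.mem_toFinset, mem_roots hsep.ne_zero]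
      simpa using h
    · exact h
  have htop' : ⨆ σ : R, S.eigenspace (σ : ℂ) = ⊤ := by
    rw [eq_top_iff, ← htop]
    refine iSup_le fun σ => ?_
    by_cases h : σ ∈ R
    · exact le_iSup (fun σ : R => S.eigenspace (σ : ℂ)) ⟨σ, h⟩
    · rw [hbot σ h]; exact bot_le
  have hind : iSupIndep fun σ : R => S.eigenspace (σ : ℂ) :=
    S.eigenspaces_iSupIndep.comp Subtype.val_injective
  have hint := DirectSum.isInternal_submodule_of_iSupIndep_of_iSup_eq_top hind htop'
  rw [← (LinearEquiv.ofBijective (DirectSum.coeLinearMap _) hint).finrank_eq,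
    Module.finrank_directSum, ← Finset.sum_coe_sort R]

theorem twistedEigSpace_shift_mem {N : ℕ} {A : ℝ → Matrix (Fin N) (Fin N) ℝ} {T T₀ : ℝ}
    (hAper : ∀ t, A (t + T₀) = A t) {σ : ℂ} {μ : ℝ} {y : ℝ → (Fin N → ℂ)}
    (hy : y ∈ twistedEigSpace N A T σ μ) :
    (fun t => y (t + T₀)) ∈ twistedEigSpace N A T σ μ := by
  rw [twistedEigSpace_mem_iff] at hy ⊢
  obtain ⟨h1, h2, h3⟩ := hy
  refine ⟨h1.comp (contDiff_id.add contDiff_const), fun t => ?_, fun t => ?_⟩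
  · rw [← h2, add_right_comm]
  · have e1 : deriv (fun t => y (t + T₀)) = fun t => deriv y (t + T₀) := by
      ext1 t; exact deriv_comp_add_const y T₀ t
    have e2 : deriv (fun t => deriv y (t + T₀)) t = deriv (deriv y) (t + T₀) :=
      deriv_comp_add_const (deriv y) T₀ t
    rw [e1, e2, ← hAper t]
    exact h3 (t + T₀)

open Polynomial in
theorem finrank_twistedEigSpace_iterate {N : ℕ} {A : ℝ → Matrix (Fin N) (Fin N) ℝ} {T₀ : ℝ}
    (hAper : ∀ t, A (t + T₀) = A t) {k : ℕ} (hk : 0 < k) {θ : ℂ} (hθ : θ ≠ 0) (μ : ℝ)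
    [FiniteDimensional ℂ (twistedEigSpace N A (k * T₀) θ μ)] :
    Module.finrank ℂ (twistedEigSpace N A (k * T₀) θ μ) =
      ∑ σ ∈ ((X : ℂ[X]) ^ k - C θ).roots.toFinset,
        Module.finrank ℂ (twistedEigSpace N A T₀ σ μ) := by
  let S : Module.End ℂ (twistedEigSpace N A (k * T₀) θ μ) :=
    (LinearMap.funLeft ℂ (Fin N → ℂ) (fun t : ℝ => t + T₀)).restrict
      fun y hy => twistedEigSpace_shift_mem hAper hy
  have hSapp : ∀ y t, (S y : ℝ → Fin N → ℂ) t = (y : ℝ → Fin N → ℂ) (t + T₀) := fun y t => rfl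
  have hSpow : ∀ (n : ℕ) y t,
      ((S ^ n) y : ℝ → Fin N → ℂ) t = (y : ℝ → Fin N → ℂ) (t + n * T₀) := by
    intro n
    induction n with
    | zero => simp
    | succ n ih =>
      intro y t
      rw [pow_succ', Module.End.mul_apply, hSapp, ih]
      exact congrArg _ (by push_cast; ring)
  have hS : S ^ k = θ • 1 := by
    ext1 y
    apply Subtype.ext
    funext t
    rw [hSpow]
    exact (twistedEigSpace_mem_iff.1 y.2).2.1 t
  rw [S.finrank_eq_sum_eigenspace_of_pow_eq hk hθ hS]
  refine Finset.sum_congr rfl fun σ hσ => ?_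
  have hσk : σ ^ k = θ := by
    rw [Multiset.mem_toFinset, mem_roots (X_pow_sub_C_ne_zero hk θ)] at hσ
    simpa [sub_eq_zero] using hσ
  have hmap : (S.eigenspace σ).map (twistedEigSpace N A (k * T₀) θ μ).subtype =
      twistedEigSpace N A T₀ σ μ := by
    ext y
    rw [Submodule.mem_map]
    constructor
    · rintro ⟨z, hz, rfl⟩
      obtain ⟨h1, h2, h3⟩ := twistedEigSpace_mem_iff.1 z.2
      refine twistedEigSpace_mem_iff.2 ⟨h1, fun t => ?_, h3⟩
      have := congrArg (fun w : twistedEigSpace N A (k * T₀) θ μ => (w : ℝ → Fin N → ℂ) t)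
        (Module.End.mem_eigenspace_iff.1 hz)
      exact this
    · intro hy
      obtain ⟨h1, h2, h3⟩ := twistedEigSpace_mem_iff.1 hy
      have hiter : ∀ (n : ℕ) t, y (t + n * T₀) = σ ^ n • y t := by
        intro n
        induction n with
        | zero => simp
        | succ n ih =>
          intro t
          have : t + (n + 1 : ℕ) * T₀ = t + n * T₀ + T₀ := by push_cast; ring
          rw [this, h2, ih, smul_smul, pow_succ']
      refine ⟨⟨y, twistedEigSpace_mem_iff.2 ⟨h1, fun t => ?_, h3⟩⟩, ?_, rfl⟩
      · rw [hiter, hσk]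
      · rw [Module.End.mem_eigenspace_iff]
        apply Subtype.ext
        funext t
        exact h2 t
  rw [← hmap]
  exact (LinearEquiv.finrank_eq
    (Submodule.equivMapOfInjective _ (Submodule.subtype_injective _) _))

/-- The real inner product on `Fin N → ℂ`. -/
def reDot {N : ℕ} (u v : Fin N → ℂ) : ℝ :=
  ∑ i, ((u i).re * (v i).re + (u i).im * (v i).im)

section reDot

variable {N : ℕ}

theorem reDot_comm (u v : Fin N → ℂ) : reDot u v = reDot v u := by
  unfold reDot
  exact Finset.sum_congr rfl fun i _ => by ring

theorem reDot_add_right (u v w : Fin N → ℂ) : reDot u (v + w) = reDot u v + reDot u w := by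
  unfold reDot
  rw [← Finset.sum_add_distrib]
  exact Finset.sum_congr rfl fun i _ => by simp; ring

theorem reDot_neg_right (u v : Fin N → ℂ) : reDot u (-v) = -reDot u v := by
  unfold reDot
  rw [← Finset.sum_neg_distrib]
  exact Finset.sum_congr rfl fun i _ => by simp; ring

theorem reDot_sub_right (u v w : Fin N → ℂ) : reDot u (v - w) = reDot u v - reDot u w := by
  rw [sub_eq_add_neg, reDot_add_right, reDot_neg_right, sub_eq_add_neg]

theorem reDot_smul_right (u v : Fin N → ℂ) (c : ℝ) : reDot u ((c : ℂ) • v) = c * reDot u v := by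
  unfold reDot
  rw [Finset.mul_sum]
  exact Finset.sum_congr rfl fun i _ => by simp; ring

theorem reDot_sum_right {ι : Type*} (s : Finset ι) (u : Fin N → ℂ) (v : ι → Fin N → ℂ) :
    reDot u (∑ j ∈ s, v j) = ∑ j ∈ s, reDot u (v j) := by
  unfold reDot
  rw [Finset.sum_comm]
  refine Finset.sum_congr rfl fun i _ => ?_
  simp [Finset.mul_sum, Finset.sum_add_distrib]

theorem reDot_sum_left {ι : Type*} (s : Finset ι) (u : Fin N → ℂ) (v : ι → Fin N → ℂ) :
    reDot (∑ j ∈ s, v j) u = ∑ j ∈ s, reDot (v j) u := by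
  simp_rw [reDot_comm _ u]
  exact reDot_sum_right s u v

theorem reDot_smul_smul {σ : ℂ} (hσ : ‖σ‖ = 1) (u v : Fin N → ℂ) :
    reDot (σ • u) (σ • v) = reDot u v := by
  have h : σ.re * σ.re + σ.im * σ.im = 1 := by
    rw [← Complex.normSq_apply, Complex.normSq_eq_norm_sq, hσ, one_pow]
  unfold reDot
  refine Finset.sum_congr rfl fun i _ => ?_
  simp only [Pi.smul_apply, smul_eq_mul, Complex.mul_re, Complex.mul_im]
  linear_combination ((u i).re * (v i).re + (u i).im * (v i).im) * h

theorem reDot_self_nonneg (u : Fin N → ℂ) : 0 ≤ reDot u u :=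
  Finset.sum_nonneg fun i _ => by nlinarith [sq_nonneg (u i).re, sq_nonneg (u i).im]

theorem eq_zero_of_reDot_self_eq_zero {u : Fin N → ℂ} (h : reDot u u = 0) : u = 0 := by
  unfold reDot at h
  rw [Finset.sum_eq_zero_iff_of_nonneg
    fun i _ => by nlinarith [sq_nonneg (u i).re, sq_nonneg (u i).im]] at h
  funext i
  have := h i (Finset.mem_univ i)
  apply Complex.ext <;> simp <;> nlinarith [sq_nonneg (u i).re, sq_nonneg (u i).im]

theorem reDot_mulVec {A : Matrix (Fin N) (Fin N) ℝ} (u v : Fin N → ℂ) :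
    reDot u ((A.map Complex.ofReal).mulVec v) =
      ∑ i, ∑ j, A i j * ((u i).re * (v j).re + (u i).im * (v j).im) := by
  unfold reDot
  refine Finset.sum_congr rfl fun i _ => ?_
  simp only [Matrix.mulVec, dotProduct, Matrix.map_apply, Complex.re_sum, Complex.im_sum,
    Complex.re_ofReal_mul, Complex.im_ofReal_mul, Finset.mul_sum, ← Finset.sum_add_distrib]
  exact Finset.sum_congr rfl fun j _ => by ring

theorem reDot_mulVec_comm {A : Matrix (Fin N) (Fin N) ℝ} (hA : A.IsSymm) (u v : Fin N → ℂ) :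
    reDot u ((A.map Complex.ofReal).mulVec v) = reDot ((A.map Complex.ofReal).mulVec u) v := by
  rw [reDot_comm _ v, reDot_mulVec, reDot_mulVec, Finset.sum_comm]
  refine Finset.sum_congr rfl fun i _ => Finset.sum_congr rfl fun j _ => ?_
  rw [hA.apply i j]
  ring

theorem reDot_mulVec_self_le {A : Matrix (Fin N) (Fin N) ℝ} {B : ℝ} (hB : ∀ i j, |A i j| ≤ B)
    (v : Fin N → ℂ) :
    reDot v ((A.map Complex.ofReal).mulVec v) ≤ N * B * reDot v v := by
  have key : ∀ i j, A i j * ((v i).re * (v j).re + (v i).im * (v j).im) ≤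
      B / 2 * ((v i).re * (v i).re + (v i).im * (v i).im) +
        B / 2 * ((v j).re * (v j).re + (v j).im * (v j).im) := by
    intro i j
    obtain ⟨h1, h2⟩ := abs_le.1 (hB i j)
    nlinarith [mul_nonneg (sub_nonneg.2 h2) (sq_nonneg ((v i).re + (v j).re)),
      mul_nonneg (sub_nonneg.2 h2) (sq_nonneg ((v i).im + (v j).im)),
      mul_nonneg (neg_le_iff_add_nonneg.1 h1) (sq_nonneg ((v i).re - (v j).re)),
      mul_nonneg (neg_le_iff_add_nonneg.1 h1) (sq_nonneg ((v i).im - (v j).im))]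
  rw [reDot_mulVec]
  refine (Finset.sum_le_sum fun i _ => Finset.sum_le_sum fun j _ => key i j).trans_eq ?_
  simp only [Finset.sum_add_distrib, Finset.sum_const, Finset.card_univ, Fintype.card_fin,
    nsmul_eq_mul, ← Finset.mul_sum]
  rw [← Finset.sum_add_distrib]
  unfold reDot
  ring

theorem HasDerivAt.reDot {y z : ℝ → Fin N → ℂ} {y' z' : Fin N → ℂ} {t : ℝ}
    (hy : HasDerivAt y y' t) (hz : HasDerivAt z z' t) :
    HasDerivAt (fun t => reDot (y t) (z t)) (reDot y' (z t) + reDot (y t) z') t := by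
  unfold _root_.reDot
  rw [← Finset.sum_add_distrib]
  refine HasDerivAt.fun_sum fun i _ => ?_
  have hre {f : ℝ → Fin N → ℂ} {f' : Fin N → ℂ} (h : HasDerivAt f f' t) :
      HasDerivAt (fun t => (f t i).re) (f' i).re t :=
    Complex.reCLM.hasFDerivAt.comp_hasDerivAt t (hasDerivAt_pi.1 h i)
  have him {f : ℝ → Fin N → ℂ} {f' : Fin N → ℂ} (h : HasDerivAt f f' t) :
      HasDerivAt (fun t => (f t i).im) (f' i).im t :=
    Complex.imCLM.hasFDerivAt.comp_hasDerivAt t (hasDerivAt_pi.1 h i)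
  exact (((hre hy).mul (hre hz)).add ((him hy).mul (him hz))).congr_deriv (by ring)

theorem Continuous.reDot {y z : ℝ → Fin N → ℂ} (hy : Continuous y) (hz : Continuous z) :
    Continuous fun t => reDot (y t) (z t) := by
  unfold _root_.reDot
  fun_prop

end reDot

open MeasureTheory intervalIntegral

theorem mul_integral_sq_le_integral_deriv_sq {f f' : ℝ → ℝ}
    (hf : ∀ t, HasDerivAt f (f' t) t) (hf' : Continuous f') {a b C : ℝ} (hab : a ≤ b)
    (ha : f a = 0) (hb : f b = 0) (hC : 0 ≤ C) (hCb : C * (b - a) ^ 2 ≤ 1) :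
    C * ∫ t in a..b, f t ^ 2 ≤ ∫ t in a..b, f' t ^ 2 := by
  have hfc : Continuous f := continuous_iff_continuousAt.2 fun t => (hf t).continuousAt
  set m := (a + b) / 2 with hm
  have hderiv : ∀ t, HasDerivAt (fun t => -(2 * C) * (t - m) * f t ^ 2)
      (-(2 * C) * f t ^ 2 + -(2 * C) * (t - m) * (2 * f t * f' t)) t := by
    intro t
    have h1 : HasDerivAt (fun t : ℝ => -(2 * C) * (t - m)) (-(2 * C)) t := by
      simpa using ((hasDerivAt_id t).sub_const m).const_mul (-(2 * C))
    have h2 : HasDerivAt (fun t : ℝ => f t ^ 2) (2 * f t * f' t) t := by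
      simpa using (hf t).fun_pow 2
    exact h1.mul h2
  have hint : ∫ t in a..b, (-(2 * C) * f t ^ 2 + -(2 * C) * (t - m) * (2 * f t * f' t)) = 0 := by
    rw [integral_eq_sub_of_hasDerivAt (fun t _ => hderiv t)
      (Continuous.intervalIntegrable (by fun_prop) _ _), ha, hb]
    ring
  rw [← intervalIntegral.integral_const_mul]
  have hsum : ∫ t in a..b, C * f t ^ 2 = ∫ t in a..b, (C * f t ^ 2 +
      (-(2 * C) * f t ^ 2 + -(2 * C) * (t - m) * (2 * f t * f' t))) := by
    rw [intervalIntegral.integral_add (Continuous.intervalIntegrable (by fun_prop) _ _)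
      (Continuous.intervalIntegrable (by fun_prop) _ _), hint, add_zero]
  rw [hsum]
  refine integral_mono_on hab (Continuous.intervalIntegrable (by fun_prop) _ _)
    (Continuous.intervalIntegrable (by fun_prop) _ _) fun t ht => ?_
  have h1 : (t - m) ^ 2 ≤ (b - a) ^ 2 / 4 := by
    rw [hm]; nlinarith [mul_nonneg (sub_nonneg.2 ht.1) (sub_nonneg.2 ht.2)]
  have h2 : 4 * (C * (t - m) ^ 2) ≤ 1 := by nlinarith [mul_le_mul_of_nonneg_left h1 hC]
  have h3 : 4 * C ^ 2 * (t - m) ^ 2 ≤ C := by nlinarith [mul_le_mul_of_nonneg_left h2 hC]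
  nlinarith [sq_nonneg (f' t + 2 * C * (t - m) * f t),
    mul_le_mul_of_nonneg_right h3 (sq_nonneg (f t))]

theorem mul_integral_sq_le_integral_deriv_sq_of_grid {f f' : ℝ → ℝ}
    (hf : ∀ t, HasDerivAt f (f' t) t) (hf' : Continuous f') {h C : ℝ} (hh : 0 ≤ h) {M : ℕ}
    (hgrid : ∀ j ≤ M, f (j * h) = 0) (hC : 0 ≤ C) (hCb : C * h ^ 2 ≤ 1) :
    C * ∫ t in (0 : ℝ)..(M * h), f t ^ 2 ≤ ∫ t in (0 : ℝ)..(M * h), f' t ^ 2 := by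
  have hfc : Continuous f := continuous_iff_continuousAt.2 fun t => (hf t).continuousAt
  have e1 := sum_integral_adjacent_intervals (μ := volume) (f := fun t => f t ^ 2)
    (a := fun j : ℕ => (j : ℝ) * h) (n := M)
    fun j _ => Continuous.intervalIntegrable (by fun_prop) _ _
  have e2 := sum_integral_adjacent_intervals (μ := volume) (f := fun t => f' t ^ 2)
    (a := fun j : ℕ => (j : ℝ) * h) (n := M)
    fun j _ => Continuous.intervalIntegrable (by fun_prop) _ _
  simp only [Nat.cast_zero, zero_mul] at e1 e2
  rw [← e1, ← e2, Finset.mul_sum]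
  refine Finset.sum_le_sum fun j hj => ?_
  have hj := Finset.mem_range.1 hj
  have hd : ((j + 1 : ℕ) : ℝ) * h - j * h = h := by push_cast; ring
  exact mul_integral_sq_le_integral_deriv_sq hf hf' (by linarith) (hgrid j hj.le)
    (hgrid (j + 1) hj) hC (by rwa [hd])

theorem mul_integral_reDot_le_of_grid {N : ℕ} {u u' : ℝ → Fin N → ℂ}
    (hu : ∀ t, HasDerivAt u (u' t) t) (hu' : Continuous u') {h C : ℝ} (hh : 0 ≤ h) {M : ℕ}
    (hgrid : ∀ j ≤ M, u (j * h) = 0) (hC : 0 ≤ C) (hCb : C * h ^ 2 ≤ 1) :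
    C * ∫ t in (0 : ℝ)..(M * h), reDot (u t) (u t) ≤
      ∫ t in (0 : ℝ)..(M * h), reDot (u' t) (u' t) := by
  have huc : Continuous u := continuous_iff_continuousAt.2 fun t => (hu t).continuousAt
  have hexp : ∀ w : ℝ → Fin N → ℂ, Continuous w → ∫ t in (0 : ℝ)..(M * h), reDot (w t) (w t) =
      ∑ i, ((∫ t in (0 : ℝ)..(M * h), (w t i).re ^ 2) +
        ∫ t in (0 : ℝ)..(M * h), (w t i).im ^ 2) := by
    intro w hw
    unfold reDot
    rw [intervalIntegral.integral_finsetSum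
      fun i _ => Continuous.intervalIntegrable (by fun_prop) _ _]
    refine Finset.sum_congr rfl fun i _ => ?_
    rw [← intervalIntegral.integral_add (Continuous.intervalIntegrable (by fun_prop) _ _)
      (Continuous.intervalIntegrable (by fun_prop) _ _)]
    simp only [sq]
  rw [hexp u huc, hexp u' hu', Finset.mul_sum]
  refine Finset.sum_le_sum fun i _ => ?_
  rw [mul_add]
  refine add_le_add ?_ ?_
  · exact mul_integral_sq_le_integral_deriv_sq_of_grid (f := fun t => (u t i).re)
      (fun t => Complex.reCLM.hasFDerivAt.comp_hasDerivAt t (hasDerivAt_pi.1 (hu t) i))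
      (by fun_prop) hh (fun j hj => by simp [hgrid j hj]) hC hCb
  · exact mul_integral_sq_le_integral_deriv_sq_of_grid (f := fun t => (u t i).im)
      (fun t => Complex.imCLM.hasFDerivAt.comp_hasDerivAt t (hasDerivAt_pi.1 (hu t) i))
      (by fun_prop) hh (fun j hj => by simp [hgrid j hj]) hC hCb

section twisted

variable {N : ℕ} {A : ℝ → Matrix (Fin N) (Fin N) ℝ} {T : ℝ} {σ : ℂ}

theorem deriv_twisted {y : ℝ → Fin N → ℂ} (hy : ∀ t, y (t + T) = σ • y t) (t : ℝ) :
    deriv y (t + T) = σ • deriv y t := by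
  rw [← deriv_comp_add_const y T t]
  simp_rw [hy]
  exact deriv_const_smul_field σ y

theorem integral_reDot_deriv_self (hσ : ‖σ‖ = 1) {u : ℝ → Fin N → ℂ} (hu : ContDiff ℝ 2 u)
    (htw : ∀ t, u (t + T) = σ • u t) :
    ∫ t in (0 : ℝ)..T, reDot (deriv u t) (deriv u t) =
      ∫ t in (0 : ℝ)..T, reDot (u t) (-deriv (deriv u) t) := by
  have hc0 := hu.continuous
  have hc1 := hu.continuous_deriv (by norm_num)
  have hc2 : Continuous (deriv (deriv u)) := (hu.deriv' (n := 1)).continuous_deriv_one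
  have hd0 : ∀ t, HasDerivAt u (deriv u t) t := fun t =>
    (hu.differentiable (by norm_num) t).hasDerivAt
  have hd1 : ∀ t, HasDerivAt (deriv u) (deriv (deriv u) t) t := fun t =>
    (hu.differentiable_deriv_two t).hasDerivAt
  have hi1 := ((hc1.reDot hc1).intervalIntegrable (μ := volume) 0 T)
  have hi2 := ((hc0.reDot hc2).intervalIntegrable (μ := volume) 0 T)
  have h := integral_eq_sub_of_hasDerivAt (a := 0) (b := T)
    (fun t _ => (hd0 t).reDot (hd1 t)) (hi1.add hi2)
  have hT := htw 0
  have hT' := deriv_twisted htw 0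
  rw [zero_add] at hT hT'
  rw [hT, hT', reDot_smul_smul hσ, sub_self, intervalIntegral.integral_add hi1 hi2] at h
  simp_rw [reDot_neg_right]
  rw [intervalIntegral.integral_neg]
  linarith

theorem integral_reDot_eq_zero_of_ne (hsymm : ∀ t, (A t).IsSymm) (hσ : ‖σ‖ = 1) {μ ν : ℝ}
    (hμν : μ ≠ ν) {y z : ℝ → Fin N → ℂ} (hy : y ∈ twistedEigSet N A T σ μ)
    (hz : z ∈ twistedEigSet N A T σ ν) :
    ∫ t in (0 : ℝ)..T, reDot (y t) (z t) = 0 := by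
  obtain ⟨hy1, hy2, hy3⟩ := hy
  obtain ⟨hz1, hz2, hz3⟩ := hz
  have hdy0 : ∀ t, HasDerivAt y (deriv y t) t := fun t =>
    (hy1.differentiable (by norm_num) t).hasDerivAt
  have hdy1 : ∀ t, HasDerivAt (deriv y) (deriv (deriv y) t) t := fun t =>
    (hy1.differentiable_deriv_two t).hasDerivAt
  have hdz0 : ∀ t, HasDerivAt z (deriv z t) t := fun t =>
    (hz1.differentiable (by norm_num) t).hasDerivAt
  have hdz1 : ∀ t, HasDerivAt (deriv z) (deriv (deriv z) t) t := fun t =>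
    (hz1.differentiable_deriv_two t).hasDerivAt
  have hd : ∀ t, HasDerivAt (fun t => reDot (y t) (deriv z t) - reDot (z t) (deriv y t))
      ((μ - ν) * reDot (y t) (z t)) t := by
    intro t
    refine (((hdy0 t).reDot (hdz1 t)).sub ((hdz0 t).reDot (hdy1 t))).congr_deriv ?_
    have ey : deriv (deriv y) t =
        -(((A t).map Complex.ofReal).mulVec (y t)) - (μ : ℂ) • y t := by
      rw [← hy3 t]; abel
    have ez : deriv (deriv z) t =
        -(((A t).map Complex.ofReal).mulVec (z t)) - (ν : ℂ) • z t := by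
      rw [← hz3 t]; abel
    rw [ey, ez, reDot_sub_right, reDot_sub_right, reDot_neg_right, reDot_neg_right,
      reDot_smul_right, reDot_smul_right, reDot_mulVec_comm (hsymm t) (y t),
      reDot_comm (((A t).map Complex.ofReal).mulVec (y t)), reDot_comm (deriv z t) (deriv y t),
      reDot_comm (z t) (y t)]
    ring
  have h := integral_eq_sub_of_hasDerivAt (a := 0) (b := T) (fun t _ => hd t)
    ((continuous_const.mul (hy1.continuous.reDot hz1.continuous)).intervalIntegrable 0 T)
  have h1 := hy2 0
  have h2 := hz2 0
  have h3 := deriv_twisted hy2 0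
  have h4 := deriv_twisted hz2 0
  rw [zero_add] at h1 h2 h3 h4
  rw [h1, h2, h3, h4, reDot_smul_smul hσ, reDot_smul_smul hσ, sub_self,
    intervalIntegral.integral_const_mul] at h
  exact (mul_eq_zero.1 h).resolve_left (sub_ne_zero.2 hμν)

theorem eq_zero_of_integral_reDot_self_eq_zero (hT : 0 < T) {y : ℝ → Fin N → ℂ}
    (hy : Continuous y) (htw : ∀ t, y (t + T) = σ • y t) (hσ : σ ≠ 0)
    (h : ∫ t in (0 : ℝ)..T, reDot (y t) (y t) = 0) : y = 0 := by
  have h0 : ∀ t ∈ Set.Icc 0 T, y t = 0 := by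
    by_contra! hne
    obtain ⟨c, hc, hyc⟩ := hne
    refine (intervalIntegral.integral_pos hT (hy.reDot hy).continuousOn
      (fun t _ => reDot_self_nonneg _) ⟨c, hc, ?_⟩).ne' h
    exact (reDot_self_nonneg _).lt_of_ne' fun h' => hyc (eq_zero_of_reDot_self_eq_zero h')
  have hper : Function.Periodic (fun t => y t = 0) T := fun t => by
    simp [htw, hσ]
  funext t
  obtain ⟨s, hs, hst⟩ := hper.exists_mem_Ico₀ hT t
  exact hst.mpr (h0 s (Set.Ico_subset_Icc_self hs))

theorem exists_reDot_mulVec_le (hA : ∀ i j, Continuous fun t => A t i j) (T : ℝ) :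
    ∃ C : ℝ, 0 ≤ C ∧ ∀ t ∈ Set.Icc 0 T, ∀ v : Fin N → ℂ,
      reDot v (((A t).map Complex.ofReal).mulVec v) ≤ C * reDot v v := by
  have hex : ∀ i j, ∃ B : ℝ, ∀ t ∈ Set.Icc 0 T, ‖A t i j‖ ≤ B := fun i j =>
    isCompact_Icc.exists_bound_of_continuousOn (hA i j).continuousOn
  choose B hB using hex
  refine ⟨N * ∑ i, ∑ j, |B i j|, by positivity, fun t ht v => ?_⟩
  refine reDot_mulVec_self_le (fun i j => ?_) v
  calc |A t i j| ≤ |B i j| := (hB i j t ht).trans (le_abs_self _)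
    _ ≤ ∑ j, |B i j| :=
      Finset.single_le_sum (f := fun j => |B i j|) (fun _ _ => abs_nonneg _) (Finset.mem_univ j)
    _ ≤ ∑ i, ∑ j, |B i j| :=
      Finset.single_le_sum (f := fun i => ∑ j, |B i j|)
        (fun _ _ => Finset.sum_nonneg fun _ _ => abs_nonneg _) (Finset.mem_univ i)

theorem eq_zero_of_sum_eq_zero_on_grid (hsymm : ∀ t, (A t).IsSymm) (hσ : ‖σ‖ = 1)
    {h : ℝ} (hh : 0 < h) {M : ℕ} (hM : 0 < M) {C : ℝ} (hC : 0 ≤ C) (hCh : C * h ^ 2 ≤ 1)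
    (hAC : ∀ t ∈ Set.Icc 0 (M * h), ∀ v : Fin N → ℂ,
      reDot v (((A t).map Complex.ofReal).mulVec v) ≤ C * reDot v v)
    {s : Finset ℝ} (hs : ∀ μ ∈ s, μ < 0) {y : ℝ → ℝ → Fin N → ℂ}
    (hy : ∀ μ ∈ s, y μ ∈ twistedEigSet N A (M * h) σ μ)
    (hgrid : ∀ j < M, ∑ μ ∈ s, y μ (j * h) = 0) : ∀ μ ∈ s, y μ = 0 := by
  have hT : 0 < M * h := by positivity
  set T := M * h with hTdef
  set u : ℝ → Fin N → ℂ := fun t => ∑ μ ∈ s, y μ t with hu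
  have huC : ContDiff ℝ 2 u := ContDiff.sum fun μ hμ => (hy μ hμ).1
  have hutw : ∀ t, u (t + T) = σ • u t := by
    intro t
    simp only [hu, Finset.smul_sum]
    exact Finset.sum_congr rfl fun μ hμ => (hy μ hμ).2.1 t
  have hgrid' : ∀ j ≤ M, u (j * h) = 0 := by
    intro j hj
    rcases hj.lt_or_eq with hj | rfl
    · exact hgrid j hj
    · have h0 := hgrid 0 hM
      have := hutw 0
      rw [zero_add] at this
      rw [this]
      simp only [Nat.cast_zero, zero_mul] at h0
      simp [hu, h0]
  have hdu : deriv u = fun t => ∑ μ ∈ s, deriv (y μ) t := by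
    funext t
    exact deriv_fun_sum fun μ hμ => (hy μ hμ).1.differentiable (by norm_num) t
  have hddu : ∀ t, deriv (deriv u) t = ∑ μ ∈ s, deriv (deriv (y μ)) t := by
    intro t
    rw [hdu]
    exact deriv_fun_sum fun μ hμ => (hy μ hμ).1.differentiable_deriv_two t
  have heq : ∀ t, -deriv (deriv u) t =
      ((A t).map Complex.ofReal).mulVec (u t) + ∑ μ ∈ s, (μ : ℂ) • y μ t := by
    intro t
    rw [hddu, ← Finset.sum_neg_distrib]
    simp only [hu, Matrix.mulVec_sum]
    rw [← Finset.sum_add_distrib]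
    refine Finset.sum_congr rfl fun μ hμ => ?_
    rw [← (hy μ hμ).2.2 t]
    abel
  have hucont := huC.continuous
  have hu1 : Continuous (deriv u) := huC.continuous_deriv (by norm_num)
  have hu2 : Continuous (deriv (deriv u)) := (huC.deriv' (n := 1)).continuous_deriv_one
  have hyc : ∀ μ ∈ s, Continuous (y μ) := fun μ hμ => (hy μ hμ).1.continuous
  have hyy : ∀ μ ∈ s, ∀ ν ∈ s, Continuous fun t => μ * reDot (y ν t) (y μ t) :=
    fun μ hμ ν hν => continuous_const.mul ((hyc ν hν).reDot (hyc μ hμ))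
  have hyysum : ∀ μ ∈ s, Continuous fun t => ∑ ν ∈ s, μ * reDot (y ν t) (y μ t) :=
    fun μ hμ => continuous_finsetSum _ (hyy μ hμ)
  have hcross : Continuous fun t => ∑ μ ∈ s, ∑ ν ∈ s, μ * reDot (y ν t) (y μ t) :=
    continuous_finsetSum _ hyysum
  have hCu : Continuous fun t => C * reDot (u t) (u t) :=
    continuous_const.mul (hucont.reDot hucont)
  have hpoinc := mul_integral_reDot_le_of_grid
    (fun t => (huC.differentiable (by norm_num) t).hasDerivAt) hu1 hh.le hgrid' hC hCh
  rw [← hTdef, integral_reDot_deriv_self hσ huC hutw, ← intervalIntegral.integral_const_mul]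
    at hpoinc
  have hsplit : ∀ t, reDot (u t) (∑ μ ∈ s, (μ : ℂ) • y μ t) =
      ∑ μ ∈ s, ∑ ν ∈ s, μ * reDot (y ν t) (y μ t) := by
    intro t
    rw [reDot_sum_right]
    refine Finset.sum_congr rfl fun μ _ => ?_
    rw [reDot_smul_right]
    simp only [hu]
    rw [reDot_sum_left, Finset.mul_sum]
  have hle : ∫ t in (0 : ℝ)..T, reDot (u t) (-deriv (deriv u) t) ≤
      ∫ t in (0 : ℝ)..T, (C * reDot (u t) (u t) +
        ∑ μ ∈ s, ∑ ν ∈ s, μ * reDot (y ν t) (y μ t)) := by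
    refine integral_mono_on hT.le ((hucont.reDot hu2.neg).intervalIntegrable _ _)
      ((hCu.add hcross).intervalIntegrable _ _) fun t ht => ?_
    rw [heq, reDot_add_right, hsplit]
    linarith [hAC t ht (u t)]
  have hintsum : ∫ t in (0 : ℝ)..T, ∑ μ ∈ s, ∑ ν ∈ s, μ * reDot (y ν t) (y μ t) =
      ∑ μ ∈ s, μ * ∫ t in (0 : ℝ)..T, reDot (y μ t) (y μ t) := by
    rw [intervalIntegral.integral_finsetSum fun μ hμ => (hyysum μ hμ).intervalIntegrable _ _]
    refine Finset.sum_congr rfl fun μ hμ => ?_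
    rw [intervalIntegral.integral_finsetSum fun ν hν => (hyy μ hμ ν hν).intervalIntegrable _ _]
    rw [Finset.sum_eq_single_of_mem μ hμ fun ν hν hne => ?_, intervalIntegral.integral_const_mul]
    rw [intervalIntegral.integral_const_mul,
      integral_reDot_eq_zero_of_ne hsymm hσ hne (hy ν hν) (hy μ hμ), mul_zero]
  rw [intervalIntegral.integral_add (hCu.intervalIntegrable _ _)
    (hcross.intervalIntegrable _ _), hintsum] at hle
  have hnonneg : 0 ≤ ∑ μ ∈ s, μ * ∫ t in (0 : ℝ)..T, reDot (y μ t) (y μ t) := by linarith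
  have hterm : ∀ μ ∈ s, μ * ∫ t in (0 : ℝ)..T, reDot (y μ t) (y μ t) ≤ 0 := fun μ hμ =>
    mul_nonpos_of_nonpos_of_nonneg (hs μ hμ).le
      (intervalIntegral.integral_nonneg hT.le fun t _ => reDot_self_nonneg _)
  have hzero := (Finset.sum_eq_zero_iff_of_nonpos hterm).1
    (le_antisymm (Finset.sum_nonpos hterm) hnonneg)
  intro μ hμ
  refine eq_zero_of_integral_reDot_self_eq_zero hT (hyc μ hμ) (hy μ hμ).2.1 ?_
    ((mul_eq_zero.1 (hzero μ hμ)).resolve_left (hs μ hμ).ne)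
  rintro rfl
  simp at hσ

/-- Evaluation on a fine enough grid embeds any finite sum of negative eigenspaces. -/
theorem exists_injective_of_neg (hA : ∀ i j, Continuous fun t => A t i j)
    (hsymm : ∀ t, (A t).IsSymm) (hT : 0 < T) (hσ : ‖σ‖ = 1) :
    ∃ M : ℕ, ∀ s : Finset ℝ, (∀ μ ∈ s, μ < 0) →
      ∃ L : (∀ μ : s, twistedEigSpace N A T σ μ) →ₗ[ℂ] (Fin M → Fin N → ℂ),
        Function.Injective L := by
  obtain ⟨C, hC, hAC⟩ := exists_reDot_mulVec_le hA T
  obtain ⟨M, hM⟩ := exists_nat_gt (C * T ^ 2 + 1)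
  have hM1 : (1 : ℝ) < M := by nlinarith [mul_nonneg hC (sq_nonneg T)]
  have hM0 : 0 < M := by exact_mod_cast zero_lt_one.trans hM1
  have hMT : (M : ℝ) * (T / M) = T := by field_simp
  refine ⟨M, fun s hs => ?_⟩
  let L : (∀ μ : s, twistedEigSpace N A T σ μ) →ₗ[ℂ] (Fin M → Fin N → ℂ) :=
    { toFun := fun y j => ∑ μ : s, (y μ : ℝ → Fin N → ℂ) (j * (T / M))
      map_add' := fun y z => by
        funext j
        simp [Finset.sum_add_distrib]
      map_smul' := fun c y => by
        funext j
        simp [Finset.smul_sum] }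
  refine ⟨L, (injective_iff_map_eq_zero L).2 fun y hy => ?_⟩
  classical
  let Y : ℝ → ℝ → Fin N → ℂ := fun μ => if h : μ ∈ s then y ⟨μ, h⟩ else 0
  have hY : ∀ μ : s, Y μ = y μ := fun μ => by simp [Y]
  have key := eq_zero_of_sum_eq_zero_on_grid (h := T / M) (M := M) (y := Y) (C := C) (σ := σ)
    hsymm hσ (by positivity) hM0 hC ?_ (by rwa [hMT]) hs ?_ ?_
  · funext μ
    apply Subtype.ext
    rw [← hY μ, key μ μ.2]
    rfl
  · rw [div_pow, ← mul_div_assoc, div_le_one (by positivity)]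
    nlinarith
  · intro μ hμ
    rw [hMT, hY ⟨μ, hμ⟩]
    exact twistedEigSpace_mem_iff.1 (y ⟨μ, hμ⟩).2
  · intro j hj
    rw [← Finset.sum_coe_sort s]
    simp_rw [hY]
    exact congrFun hy ⟨j, hj⟩

theorem finiteDimensional_twistedEigSpace (hA : ∀ i j, Continuous fun t => A t i j)
    (hsymm : ∀ t, (A t).IsSymm) (hT : 0 < T) (hσ : ‖σ‖ = 1) {μ : ℝ} (hμ : μ < 0) :
    FiniteDimensional ℂ (twistedEigSpace N A T σ μ) := by
  obtain ⟨M, hM⟩ := exists_injective_of_neg hA hsymm hT hσ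
  obtain ⟨L, hL⟩ := hM {μ} (by simpa using hμ)
  have := FiniteDimensional.of_injective L hL
  exact Module.Finite.of_surjective
    (LinearMap.proj (R := ℂ) (φ := fun ν : ({μ} : Finset ℝ) => twistedEigSpace N A T σ ν)
      ⟨μ, Finset.mem_singleton_self μ⟩) (LinearMap.proj_surjective _)

theorem finite_neg_eigenvalues (hA : ∀ i j, Continuous fun t => A t i j)
    (hsymm : ∀ t, (A t).IsSymm) (hT : 0 < T) (hσ : ‖σ‖ = 1) :
    {μ : ℝ | μ < 0 ∧ Module.finrank ℂ (twistedEigSpace N A T σ μ) ≠ 0}.Finite := by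
  obtain ⟨M, hM⟩ := exists_injective_of_neg hA hsymm hT hσ
  by_contra hinf
  obtain ⟨s, hs, hcard⟩ := Set.Infinite.exists_subset_card_eq hinf (M * N + 1)
  obtain ⟨L, hL⟩ := hM s fun μ hμ => (hs hμ).1
  have : ∀ μ : s, FiniteDimensional ℂ (twistedEigSpace N A T σ μ) := fun μ =>
    finiteDimensional_twistedEigSpace hA hsymm hT hσ (hs μ.2).1
  have hle := LinearMap.finrank_le_finrank_of_injective hL
  rw [Module.finrank_pi_fintype] at hle
  simp only [Module.finrank_pi_fintype, Module.finrank_self, Finset.sum_const, Finset.card_univ,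
    Fintype.card_fin, smul_eq_mul, mul_one] at hle
  have hge : s.card • 1 ≤ ∑ μ : s, Module.finrank ℂ (twistedEigSpace N A T σ μ) := by
    rw [← Fintype.card_coe s]
    exact Finset.card_nsmul_le_sum _ _ _ fun μ _ => Nat.one_le_iff_ne_zero.2 (hs μ.2).2
  simp only [smul_eq_mul, mul_one] at hge
  omega

end twisted

open Polynomial in
/-- Bott's iteration formula
`j(kT₀, θ) = Σ_{σ^k = θ} j(T₀, σ)`, the sum running over the `k` distinct `k`-th
roots of `θ`. -/
theorem negCount_iteration (N : ℕ) (A : ℝ → Matrix (Fin N) (Fin N) ℝ)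
    (hA : ∀ i j, Continuous fun t => A t i j)
    (hsymm : ∀ t, (A t).IsSymm) (T₀ : ℝ) (hT₀ : 0 < T₀)
    (hAper : ∀ t, A (t + T₀) = A t)
    (k : ℕ) (hk : 0 < k) (θ : ℂ) (hθ : ‖θ‖ = 1) :
    twistedNegCount N A (k * T₀) θ =
      ∑ σ ∈ ((X : ℂ[X]) ^ k - C θ).roots.toFinset, twistedNegCount N A T₀ σ := by
  have hθ0 : θ ≠ 0 := by
    rintro rfl
    simp at hθ
  have hroot : ∀ σ ∈ ((X : ℂ[X]) ^ k - C θ).roots.toFinset, ‖σ‖ = 1 := by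
    intro σ hσ
    rw [Multiset.mem_toFinset, mem_roots (X_pow_sub_C_ne_zero hk θ)] at hσ
    have h : σ ^ k = θ := by simpa [sub_eq_zero] using hσ
    rw [← h, norm_pow] at hθ
    exact (pow_eq_one_iff_of_nonneg (norm_nonneg σ) hk.ne').1 hθ
  unfold twistedNegCount
  rw [← finsum_sum_comm]
  · refine finsum_congr fun μ => ?_
    by_cases hμ : μ < 0
    · have := finiteDimensional_twistedEigSpace (N := N) (T := k * T₀) hA hsymm
        (by positivity) hθ hμ
      simp only [hμ, finsum_true]
      exact finrank_twistedEigSpace_iterate hAper hk hθ0 μ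
    · simp [hμ]
  · intro σ hσ
    refine (finite_neg_eigenvalues (N := N) hA hsymm hT₀ (hroot σ hσ)).subset fun μ hμ => ?_
    by_cases hμ0 : μ < 0
    · exact ⟨hμ0, by simpa [hμ0] using hμ⟩
    · simp [hμ0] at hμ
end

section
/- Assume equation ẍ + V'_x(t,x) = 0 is non-resonant (every periodic solution is non-degenerate as a critical point of the action). Then for every ρ = k₁/(k₂T₀) with k₁, k₂ coprime, the number of fundamental solutions (periodic solutions in C²_{k₁,k₂T₀}) is finite, even, and positive: it equals 2r for some integer r ≥ 1. -/
/-- The set of fundamental solutions: `C²` solutions of `ẍ + V'_x(t,x) = 0` making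
`k₁` windings in time `k₂T₀`. -/
def fundSolutions (V : ℝ → ℝ → ℝ) (T₀ : ℝ) (k₁ : ℤ) (k₂ : ℕ) : Set (ℝ → ℝ) :=
  {x | ContDiff ℝ 2 x ∧ (∀ t, deriv (deriv x) t + deriv (V t) (x t) = 0) ∧
    ∀ t, x (t + k₂ * T₀) = x t + k₁}

/-- Identification modulo integer shifts (i.e. as curves in `S¹ = ℝ/ℤ`). -/
def fundSetoid (V : ℝ → ℝ → ℝ) (T₀ : ℝ) (k₁ : ℤ) (k₂ : ℕ) :
    Setoid (fundSolutions V T₀ k₁ k₂) where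
  r x y := ∃ m : ℤ, ∀ t, (y : ℝ → ℝ) t = (x : ℝ → ℝ) t + m
  iseqv := by
    constructor
    · exact fun x => ⟨0, by simp⟩
    · rintro x y ⟨m, hm⟩
      exact ⟨-m, fun t => by rw [hm t]; push_cast; ring⟩
    · rintro x y z ⟨m, hm⟩ ⟨m', hm'⟩
      exact ⟨m + m', fun t => by rw [hm' t, hm t]; push_cast; ring⟩

section

open Set Filter Topology
open scoped NNReal

/-- The ratio `r b / r a` of the end values of a continuous square root `r` of `g` on `[a, b]`. -/
noncomputable def sqrtRatio (g : ℝ → ℂ) (a b : ℝ) : ℂ :=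
  open Classical in
  if h : ∃ r : ℝ → ℂ, ContinuousOn r (Icc a b) ∧ ∀ t ∈ Icc a b, r t ^ 2 = g t then
    h.choose b / h.choose a else 1

theorem sqrtRatio_eq {g r : ℝ → ℂ} {a b : ℝ} (hab : a ≤ b) (hr : ContinuousOn r (Icc a b))
    (hsq : ∀ t ∈ Icc a b, r t ^ 2 = g t) (hg : ∀ t ∈ Icc a b, g t ≠ 0) :
    sqrtRatio g a b = r b / r a := by
  have h : ∃ r : ℝ → ℂ, ContinuousOn r (Icc a b) ∧ ∀ t ∈ Icc a b, r t ^ 2 = g t := ⟨r, hr, hsq⟩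
  rw [sqrtRatio, dif_pos h]
  obtain ⟨hc, hs⟩ := h.choose_spec
  have hne : ∀ {t}, t ∈ Icc a b → r t ≠ 0 := fun {t} ht h0 ↦ hg t ht (by simp [← hsq t ht, h0])
  have ha : a ∈ Icc a b := ⟨le_rfl, hab⟩
  have hb : b ∈ Icc a b := ⟨hab, le_rfl⟩
  rcases isPreconnected_Icc.eq_or_eq_neg_of_sq_eq hc hr
    (fun t ht ↦ (hs t ht).trans (hsq t ht).symm) hne with h1 | h1
  · rw [h1 ha, h1 hb]
  · rw [h1 ha, h1 hb]
    simp [neg_div_neg_eq]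

theorem exists_continuousOn_sqrt_Icc {g : ℝ → ℂ} {a b : ℝ} (hab : a ≤ b)
    (hc : ContinuousOn g (Icc a b)) (hg : ∀ t ∈ Icc a b, g t ≠ 0) :
    ∃ r : ℝ → ℂ, ContinuousOn r (Icc a b) ∧ ∀ t ∈ Icc a b, r t ^ 2 = g t := by
  have hU : IsSimplyConnected (univ : Set ℝ) :=
    have := (convex_univ (𝕜 := ℝ) (E := ℝ)).contractibleSpace univ_nonempty
    SimplyConnectedSpace.ofContractible _
  obtain ⟨r, hr, hr2⟩ := Complex.exists_continuousOn_pow_eq hU isOpen_univ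
    (g := fun t ↦ g (projIcc a b hab t))
    (Continuous.continuousOn (hc.comp_continuous (continuous_subtype_val.comp continuous_projIcc)
      fun t ↦ (projIcc a b hab t).2))
    (by rintro ⟨t, -, ht⟩; exact hg _ (projIcc a b hab t).2 ht) two_ne_zero
  exact ⟨r, hr.mono (subset_univ _), fun t ht ↦ by rw [hr2, projIcc_of_mem hab ht]⟩

theorem exists_continuous_sqrt_box {f : ℝ × ℝ → ℂ} {a b c d : ℝ} (hab : a ≤ b) (hcd : c ≤ d)
    (hf : Continuous f) (hne : ∀ p ∈ Icc a b ×ˢ Icc c d, f p ≠ 0) :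
    ∃ r : ℝ × ℝ → ℂ, Continuous r ∧ ∀ p ∈ Icc a b ×ˢ Icc c d, r p ^ 2 = f p := by
  have hU : IsSimplyConnected (univ : Set (ℝ × ℝ)) :=
    have := (convex_univ (𝕜 := ℝ) (E := ℝ × ℝ)).contractibleSpace univ_nonempty
    SimplyConnectedSpace.ofContractible _
  obtain ⟨r, hr, hr2⟩ := Complex.exists_continuousOn_pow_eq hU isOpen_univ
    (g := fun p ↦ f (projIcc a b hab p.1, projIcc c d hcd p.2))
    (by
      have h1 : Continuous fun x ↦ (projIcc a b hab x : ℝ) :=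
        continuous_subtype_val.comp continuous_projIcc
      have h2 : Continuous fun x ↦ (projIcc c d hcd x : ℝ) :=
        continuous_subtype_val.comp continuous_projIcc
      exact (hf.comp ((h1.comp continuous_fst).prodMk (h2.comp continuous_snd))).continuousOn)
    (by
      rintro ⟨p, -, hp⟩
      exact hne _ ⟨(projIcc a b hab p.1).2, (projIcc c d hcd p.2).2⟩ hp) two_ne_zero
  refine ⟨r, continuousOn_univ.1 hr, fun p hp ↦ ?_⟩
  rw [hr2, projIcc_of_mem hab hp.1, projIcc_of_mem hcd hp.2]

theorem sqrtRatio_ne_zero {g : ℝ → ℂ} {a b : ℝ} (hab : a ≤ b)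
    (hc : ContinuousOn g (Icc a b)) (hg : ∀ t ∈ Icc a b, g t ≠ 0) : sqrtRatio g a b ≠ 0 := by
  obtain ⟨r, hr, hsq⟩ := exists_continuousOn_sqrt_Icc hab hc hg
  have hne : ∀ {t}, t ∈ Icc a b → r t ≠ 0 := fun {t} ht h0 ↦ hg t ht (by simp [← hsq t ht, h0])
  rw [sqrtRatio_eq hab hr hsq hg]
  exact div_ne_zero (hne ⟨hab, le_rfl⟩) (hne ⟨le_rfl, hab⟩)

theorem sqrtRatio_mul {g : ℝ → ℂ} {a b m : ℝ} (ham : a ≤ m) (hmb : m ≤ b)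
    (hc : ContinuousOn g (Icc a b)) (hg : ∀ t ∈ Icc a b, g t ≠ 0) :
    sqrtRatio g a m * sqrtRatio g m b = sqrtRatio g a b := by
  obtain ⟨r, hr, hsq⟩ := exists_continuousOn_sqrt_Icc (ham.trans hmb) hc hg
  have hne : ∀ {t}, t ∈ Icc a b → r t ≠ 0 := fun {t} ht h0 ↦ hg t ht (by simp [← hsq t ht, h0])
  have h1 : Icc a m ⊆ Icc a b := Icc_subset_Icc_right hmb
  have h2 : Icc m b ⊆ Icc a b := Icc_subset_Icc_left ham
  rw [sqrtRatio_eq (ham.trans hmb) hr hsq hg,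
    sqrtRatio_eq ham (hr.mono h1) (fun t ht ↦ hsq t (h1 ht)) (fun t ht ↦ hg t (h1 ht)),
    sqrtRatio_eq hmb (hr.mono h2) (fun t ht ↦ hsq t (h2 ht)) (fun t ht ↦ hg t (h2 ht))]
  have := hne (t := m) ⟨ham, hmb⟩
  field_simp

/-- The monodromy of the square root of `f` along the boundary of the box `[a, b] × [c, d]`. -/
noncomputable def boxSign (f : ℝ × ℝ → ℂ) (a b c d : ℝ) : ℂ :=
  sqrtRatio (fun x ↦ f (x, c)) a b * sqrtRatio (fun y ↦ f (b, y)) c d /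
    (sqrtRatio (fun x ↦ f (x, d)) a b * sqrtRatio (fun y ↦ f (a, y)) c d)

theorem boxSign_eq_one {f : ℝ × ℝ → ℂ} {a b c d : ℝ} (hab : a ≤ b) (hcd : c ≤ d)
    (hf : Continuous f) (hne : ∀ p ∈ Icc a b ×ˢ Icc c d, f p ≠ 0) : boxSign f a b c d = 1 := by
  obtain ⟨r, hr, hsq⟩ := exists_continuous_sqrt_box hab hcd hf hne
  have hne' : ∀ {p}, p ∈ Icc a b ×ˢ Icc c d → r p ≠ 0 := fun {p} hp h0 ↦
    hne p hp (by simp [← hsq p hp, h0])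
  have ha : a ∈ Icc a b := ⟨le_rfl, hab⟩
  have hb : b ∈ Icc a b := ⟨hab, le_rfl⟩
  have hc : c ∈ Icc c d := ⟨le_rfl, hcd⟩
  have hd : d ∈ Icc c d := ⟨hcd, le_rfl⟩
  have hh : ∀ y ∈ Icc c d, sqrtRatio (fun x ↦ f (x, y)) a b = r (b, y) / r (a, y) := fun y hy ↦
    sqrtRatio_eq (r := fun x ↦ r (x, y)) hab (by fun_prop) (fun t ht ↦ hsq _ ⟨ht, hy⟩)
      (fun t ht ↦ hne _ ⟨ht, hy⟩)
  have hv : ∀ x ∈ Icc a b, sqrtRatio (fun y ↦ f (x, y)) c d = r (x, d) / r (x, c) := fun x hx ↦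
    sqrtRatio_eq (r := fun y ↦ r (x, y)) hcd (by fun_prop) (fun t ht ↦ hsq _ ⟨hx, ht⟩)
      (fun t ht ↦ hne _ ⟨hx, ht⟩)
  rw [boxSign, hh c hc, hh d hd, hv a ha, hv b hb]
  have h1 := hne' (p := (a, c)) ⟨ha, hc⟩
  have h2 := hne' (p := (a, d)) ⟨ha, hd⟩
  have h3 := hne' (p := (b, c)) ⟨hb, hc⟩
  have h4 := hne' (p := (b, d)) ⟨hb, hd⟩
  field_simp

theorem boxSign_mul_left_right {f : ℝ × ℝ → ℂ} {a b c d m : ℝ} (ham : a < m) (hmb : m < b)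
    (hcd : c < d) (hf : Continuous f)
    (hbd : ∀ p ∈ Icc a b ×ˢ Icc c d, f p = 0 → p ∈ Ioo a b ×ˢ Ioo c d)
    (hm : ∀ y ∈ Icc c d, f (m, y) ≠ 0) :
    boxSign f a m c d * boxSign f m b c d = boxSign f a b c d := by
  have hc : ∀ t ∈ Icc a b, f (t, c) ≠ 0 := fun t ht h ↦
    lt_irrefl c (hbd (t, c) ⟨ht, le_rfl, hcd.le⟩ h).2.1
  have hd : ∀ t ∈ Icc a b, f (t, d) ≠ 0 := fun t ht h ↦
    lt_irrefl d (hbd (t, d) ⟨ht, hcd.le, le_rfl⟩ h).2.2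
  rw [boxSign, boxSign, boxSign,
    ← sqrtRatio_mul ham.le hmb.le (g := fun x ↦ f (x, c)) (by fun_prop) hc,
    ← sqrtRatio_mul ham.le hmb.le (g := fun x ↦ f (x, d)) (by fun_prop) hd]
  have h0 := sqrtRatio_ne_zero hcd.le (g := fun y ↦ f (m, y)) (by fun_prop) hm
  field_simp

theorem boxSign_mul_bottom_top {f : ℝ × ℝ → ℂ} {a b c d m : ℝ} (hcm : c < m) (hmd : m < d)
    (hab : a < b) (hf : Continuous f)
    (hbd : ∀ p ∈ Icc a b ×ˢ Icc c d, f p = 0 → p ∈ Ioo a b ×ˢ Ioo c d)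
    (hm : ∀ x ∈ Icc a b, f (x, m) ≠ 0) :
    boxSign f a b c m * boxSign f a b m d = boxSign f a b c d := by
  have ha : ∀ t ∈ Icc c d, f (a, t) ≠ 0 := fun t ht h ↦
    lt_irrefl a (hbd (a, t) ⟨⟨le_rfl, hab.le⟩, ht⟩ h).1.1
  have hb : ∀ t ∈ Icc c d, f (b, t) ≠ 0 := fun t ht h ↦
    lt_irrefl b (hbd (b, t) ⟨⟨hab.le, le_rfl⟩, ht⟩ h).1.2
  rw [boxSign, boxSign, boxSign,
    ← sqrtRatio_mul hcm.le hmd.le (g := fun x ↦ f (a, x)) (by fun_prop) ha,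
    ← sqrtRatio_mul hcm.le hmd.le (g := fun x ↦ f (b, x)) (by fun_prop) hb]
  have h0 := sqrtRatio_ne_zero hab.le (g := fun y ↦ f (y, m)) (by fun_prop) hm
  field_simp

/-- `f` is differentiable at `p` with injective differential. -/
def HasInjDeriv (f : ℝ × ℝ → ℂ) (p : ℝ × ℝ) : Prop :=
  ∃ A B : ℂ, (∀ s t : ℝ, s * A + t * B = 0 → s = 0 ∧ t = 0) ∧
    ∀ ε > 0, ∃ δ > 0, ∀ h : ℝ × ℝ, ‖h‖ ≤ δ → ‖f (p + h) - f p - (h.1 * A + h.2 * B)‖ ≤ ε * ‖h‖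

theorem exists_mul_norm_le {A B : ℂ} (h : ∀ s t : ℝ, s * A + t * B = 0 → s = 0 ∧ t = 0) :
    ∃ c > 0, ∀ v : ℝ × ℝ, c * ‖v‖ ≤ ‖v.1 * A + v.2 * B‖ := by
  let l : ℝ × ℝ →ₗ[ℝ] ℂ := (LinearMap.fst ℝ ℝ ℝ).smulRight A + (LinearMap.snd ℝ ℝ ℝ).smulRight B
  have hl : ∀ v, l v = v.1 * A + v.2 * B := fun v ↦ by simp [l]
  have hk : LinearMap.ker l = ⊥ := by
    rw [LinearMap.ker_eq_bot']
    intro v hv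
    obtain ⟨h1, h2⟩ := h v.1 v.2 (by rw [← hl, hv])
    exact Prod.ext h1 h2
  obtain ⟨K, hK, hanti⟩ := l.exists_antilipschitzWith hk
  refine ⟨(K : ℝ)⁻¹, by positivity, fun v ↦ ?_⟩
  have := hanti.le_mul_dist v 0
  simp only [dist_zero_right, map_zero] at this
  rw [← hl, inv_mul_le_iff₀ (by positivity)]
  exact this

theorem HasInjDeriv.exists_norm_sub_lt {f : ℝ × ℝ → ℂ} {p : ℝ × ℝ} (hp : HasInjDeriv f p)
    (h0 : f p = 0) : ∃ A B : ℂ, (∀ s t : ℝ, s * A + t * B = 0 → s = 0 ∧ t = 0) ∧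
    ∃ δ > 0, ∀ h : ℝ × ℝ, ‖h‖ ≤ δ → h ≠ 0 →
      ‖f (p + h) - (h.1 * A + h.2 * B)‖ < ‖h.1 * A + h.2 * B‖ := by
  obtain ⟨A, B, hAB, hd⟩ := hp
  obtain ⟨c, hc, hcv⟩ := exists_mul_norm_le hAB
  obtain ⟨δ, hδ, hδh⟩ := hd (c / 2) (by positivity)
  refine ⟨A, B, hAB, δ, hδ, fun h hh hne ↦ ?_⟩
  have h1 := hδh h hh
  have h2 := hcv h
  have h3 : 0 < ‖h‖ := norm_pos_iff.2 hne
  rw [h0, sub_zero] at h1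
  nlinarith

theorem HasInjDeriv.exists_forall_ne_zero {f : ℝ × ℝ → ℂ} {p : ℝ × ℝ} (hp : HasInjDeriv f p)
    (h0 : f p = 0) : ∃ δ > 0, ∀ h : ℝ × ℝ, ‖h‖ ≤ δ → h ≠ 0 → f (p + h) ≠ 0 := by
  obtain ⟨A, B, hAB, δ, hδ, hh⟩ := hp.exists_norm_sub_lt h0
  refine ⟨δ, hδ, fun h h1 h2 h3 ↦ ?_⟩
  have := hh h h1 h2
  rw [h3, zero_sub, norm_neg] at this
  exact lt_irrefl _ this

theorem HasInjDeriv.exists_boxSign_eq_neg_one {f : ℝ × ℝ → ℂ} {p : ℝ × ℝ} (hf : Continuous f)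
    (hp : HasInjDeriv f p) (h0 : f p = 0) :
    ∃ δ > 0, ∀ s, 0 < s → s ≤ δ → boxSign f (p.1 - s) (p.1 + s) (p.2 - s) (p.2 + s) = -1 := by
  obtain ⟨A, B, hAB, δ, hδ, hh⟩ := hp.exists_norm_sub_lt h0
  refine ⟨δ, hδ, fun s hs hsδ ↦ ?_⟩
  set g : ℝ × ℝ → ℂ := fun q ↦ ((q.1 - p.1 : ℝ) : ℂ) * A + ((q.2 - p.2 : ℝ) : ℂ) * B with hg
  have hgc : Continuous g := by fun_prop
  have hlt : ∀ q : ℝ × ℝ, |q.1 - p.1| ≤ s → |q.2 - p.2| ≤ s → q ≠ p → ‖f q - g q‖ < ‖g q‖ := by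
    intro q h1 h2 h3
    have := hh (q - p) (by
      rw [Prod.norm_def]
      exact max_le (h1.trans hsδ) (h2.trans hsδ)) (sub_ne_zero.2 h3)
    simpa [hg] using this
  have hgne : ∀ q : ℝ × ℝ, |q.1 - p.1| ≤ s → |q.2 - p.2| ≤ s → q ≠ p → g q ≠ 0 := by
    intro q h1 h2 h3 h4
    have := hlt q h1 h2 h3
    rw [h4, norm_zero] at this
    exact absurd this (norm_nonneg _).not_gt
  have hfne : ∀ q : ℝ × ℝ, |q.1 - p.1| ≤ s → |q.2 - p.2| ≤ s → q ≠ p → f q ≠ 0 := by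
    intro q h1 h2 h3 h4
    have := hlt q h1 h2 h3
    rw [h4, zero_sub, norm_neg] at this
    exact lt_irrefl _ this
  set u : ℝ × ℝ → ℂ := fun q ↦ Complex.exp (Complex.log (f q / g q) / 2) with hu
  have hslit : ∀ q : ℝ × ℝ, |q.1 - p.1| ≤ s → |q.2 - p.2| ≤ s → q ≠ p →
      f q / g q ∈ Complex.slitPlane := by
    intro q h1 h2 h3
    have h4 : ‖f q / g q - 1‖ < 1 := by
      rw [div_sub_one (hgne q h1 h2 h3), norm_div, div_lt_one (norm_pos_iff.2 (hgne q h1 h2 h3))]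
      exact hlt q h1 h2 h3
    rw [← add_sub_cancel 1 (f q / g q)]
    exact Complex.mem_slitPlane_of_norm_lt_one h4
  have husq : ∀ q : ℝ × ℝ, |q.1 - p.1| ≤ s → |q.2 - p.2| ≤ s → q ≠ p → u q ^ 2 * g q = f q := by
    intro q h1 h2 h3
    have h4 : f q / g q ≠ 0 := div_ne_zero (hfne q h1 h2 h3) (hgne q h1 h2 h3)
    rw [hu]
    simp only
    rw [← Complex.exp_nat_mul, Nat.cast_ofNat, mul_div_cancel₀ _ two_ne_zero, Complex.exp_log h4,
      div_mul_cancel₀ _ (hgne q h1 h2 h3)]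
  have hune : ∀ q, u q ≠ 0 := fun q ↦ Complex.exp_ne_zero _
  have hucont : ∀ (γ : ℝ → ℝ × ℝ) (S : Set ℝ), Continuous γ → (∀ t ∈ S, |(γ t).1 - p.1| ≤ s ∧
      |(γ t).2 - p.2| ≤ s ∧ γ t ≠ p) → ContinuousOn (fun t ↦ u (γ t)) S := by
    intro γ S hγ hS
    refine Complex.continuous_exp.comp_continuousOn (ContinuousOn.div_const ?_ _)
    refine ContinuousOn.clog ?_ fun t ht ↦ hslit _ (hS t ht).1 (hS t ht).2.1 (hS t ht).2.2
    exact (hf.comp hγ).continuousOn.div (hgc.comp hγ).continuousOn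
      fun t ht ↦ hgne _ (hS t ht).1 (hS t ht).2.1 (hS t ht).2.2
  have habs : ∀ x t : ℝ, t ∈ Icc (x - s) (x + s) → |t - x| ≤ s := fun x t ht ↦ by
    rw [abs_le]; constructor <;> linarith [ht.1, ht.2]
  have hrefl : ∀ x t : ℝ, t ∈ Icc (x - s) (x + s) → 2 * x - t ∈ Icc (x - s) (x + s) :=
    fun x t ht ↦ by constructor <;> linarith [ht.1, ht.2]
  have hside : ∀ t ∈ Icc (p.1 - s) (p.1 + s), ∀ σ : ℝ, |σ| = s →
      |t - p.1| ≤ s ∧ |p.2 + σ - p.2| ≤ s ∧ (t, p.2 + σ) ≠ p := fun t ht σ hσ ↦ by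
    refine ⟨habs _ _ ht, by simp [hσ], fun h ↦ ?_⟩
    have := congrArg Prod.snd h
    simp only [add_eq_left] at this
    simp [this] at hσ
    exact hs.ne hσ
  have hside' : ∀ t ∈ Icc (p.2 - s) (p.2 + s), ∀ σ : ℝ, |σ| = s →
      |p.1 + σ - p.1| ≤ s ∧ |t - p.2| ≤ s ∧ (p.1 + σ, t) ≠ p := fun t ht σ hσ ↦ by
    refine ⟨by simp [hσ], habs _ _ ht, fun h ↦ ?_⟩
    have := congrArg Prod.fst h
    simp only [add_eq_left] at this
    simp [this] at hσ
    exact hs.ne hσ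
  have hs1 : |s| = s := abs_of_pos hs
  have hs2 : |-s| = s := by rw [abs_neg, hs1]
  have hle : ∀ x : ℝ, x - s ≤ x + s := fun x ↦ by linarith
  obtain ⟨r, hr, hrsq⟩ := exists_continuousOn_sqrt_Icc (g := fun t ↦ g (t, p.2 + -s)) (hle p.1)
    (by fun_prop) (fun t ht ↦ by
      obtain ⟨h1, h2, h3⟩ := hside t ht _ hs2
      exact hgne _ h1 h2 h3)
  obtain ⟨k, hk, hksq⟩ := exists_continuousOn_sqrt_Icc (g := fun t ↦ g (p.1 + s, t)) (hle p.2)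
    (by fun_prop) (fun t ht ↦ by
      obtain ⟨h1, h2, h3⟩ := hside' t ht _ hs1
      exact hgne _ h1 h2 h3)
  have e1 : sqrtRatio (fun x ↦ f (x, p.2 + -s)) (p.1 - s) (p.1 + s) =
      (u (p.1 + s, p.2 + -s) * r (p.1 + s)) / (u (p.1 - s, p.2 + -s) * r (p.1 - s)) := by
    refine sqrtRatio_eq (r := fun t ↦ u (t, p.2 + -s) * r t) (hle _)
      ((hucont (fun t ↦ (t, p.2 + -s)) _ (by fun_prop) fun t ht ↦ hside t ht _ hs2).mul hr) ?_ ?_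
    · intro t ht
      obtain ⟨h1, h2, h3⟩ := hside t ht _ hs2
      rw [mul_pow, hrsq t ht, husq _ h1 h2 h3]
    · intro t ht
      obtain ⟨h1, h2, h3⟩ := hside t ht _ hs2
      exact hfne _ h1 h2 h3
  have e2 : sqrtRatio (fun x ↦ f (x, p.2 + s)) (p.1 - s) (p.1 + s) =
      (u (p.1 + s, p.2 + s) * (Complex.I * r (2 * p.1 - (p.1 + s)))) /
        (u (p.1 - s, p.2 + s) * (Complex.I * r (2 * p.1 - (p.1 - s)))) := by
    refine sqrtRatio_eq (r := fun t ↦ u (t, p.2 + s) * (Complex.I * r (2 * p.1 - t))) (hle _)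
      ((hucont (fun t ↦ (t, p.2 + s)) _ (by fun_prop) fun t ht ↦ hside t ht _ hs1).mul
        (continuousOn_const.mul (hr.comp (by fun_prop) fun t ht ↦ hrefl _ _ ht))) ?_ ?_
    · intro t ht
      obtain ⟨h1, h2, h3⟩ := hside t ht _ hs1
      rw [mul_pow, mul_pow, hrsq _ (hrefl _ _ ht), ← husq _ h1 h2 h3, Complex.I_sq]
      simp only [hg]
      push_cast
      ring
    · intro t ht
      obtain ⟨h1, h2, h3⟩ := hside t ht _ hs1
      exact hfne _ h1 h2 h3
  have e3 : sqrtRatio (fun y ↦ f (p.1 + s, y)) (p.2 - s) (p.2 + s) =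
      (u (p.1 + s, p.2 + s) * k (p.2 + s)) / (u (p.1 + s, p.2 - s) * k (p.2 - s)) := by
    refine sqrtRatio_eq (r := fun t ↦ u (p.1 + s, t) * k t) (hle _)
      ((hucont (fun t ↦ (p.1 + s, t)) _ (by fun_prop) fun t ht ↦ hside' t ht _ hs1).mul hk) ?_ ?_
    · intro t ht
      obtain ⟨h1, h2, h3⟩ := hside' t ht _ hs1
      rw [mul_pow, hksq t ht, husq _ h1 h2 h3]
    · intro t ht
      obtain ⟨h1, h2, h3⟩ := hside' t ht _ hs1
      exact hfne _ h1 h2 h3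
  have e4 : sqrtRatio (fun y ↦ f (p.1 + -s, y)) (p.2 - s) (p.2 + s) =
      (u (p.1 + -s, p.2 + s) * (Complex.I * k (2 * p.2 - (p.2 + s)))) /
        (u (p.1 + -s, p.2 - s) * (Complex.I * k (2 * p.2 - (p.2 - s)))) := by
    refine sqrtRatio_eq (r := fun t ↦ u (p.1 + -s, t) * (Complex.I * k (2 * p.2 - t))) (hle _)
      ((hucont (fun t ↦ (p.1 + -s, t)) _ (by fun_prop) fun t ht ↦ hside' t ht _ hs2).mul
        (continuousOn_const.mul (hk.comp (by fun_prop) fun t ht ↦ hrefl _ _ ht))) ?_ ?_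
    · intro t ht
      obtain ⟨h1, h2, h3⟩ := hside' t ht _ hs2
      rw [mul_pow, mul_pow, hksq _ (hrefl _ _ ht), ← husq _ h1 h2 h3, Complex.I_sq]
      simp only [hg]
      push_cast
      ring
    · intro t ht
      obtain ⟨h1, h2, h3⟩ := hside' t ht _ hs2
      exact hfne _ h1 h2 h3
  have m1 : p.1 + s ∈ Icc (p.1 - s) (p.1 + s) := ⟨hle _, le_rfl⟩
  have m2 : p.1 - s ∈ Icc (p.1 - s) (p.1 + s) := ⟨le_rfl, hle _⟩
  have m3 : p.2 + s ∈ Icc (p.2 - s) (p.2 + s) := ⟨hle _, le_rfl⟩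
  have m4 : p.2 - s ∈ Icc (p.2 - s) (p.2 + s) := ⟨le_rfl, hle _⟩
  have q1 := hrsq _ m1
  have q2 := hrsq _ m2
  have q3 := hksq _ m3
  have q4 := hksq _ m4
  have hrk : (r (p.1 + s) * k (p.2 + s)) ^ 2 = - (r (p.1 - s) * k (p.2 - s)) ^ 2 := by
    rw [mul_pow, mul_pow, q1, q2, q3, q4]
    simp only [hg]
    push_cast
    ring
  have n1 : r (p.1 - s) ≠ 0 := by
    intro h
    obtain ⟨h1, h2, h3⟩ := hside _ m2 _ hs2
    exact hgne _ h1 h2 h3 (by rw [← q2, h]; simp)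
  have n2 : r (p.1 + s) ≠ 0 := by
    intro h
    obtain ⟨h1, h2, h3⟩ := hside _ m1 _ hs2
    exact hgne _ h1 h2 h3 (by rw [← q1, h]; simp)
  have n3 : k (p.2 - s) ≠ 0 := by
    intro h
    obtain ⟨h1, h2, h3⟩ := hside' _ m4 _ hs1
    exact hgne _ h1 h2 h3 (by rw [← q4, h]; simp)
  have n4 : k (p.2 + s) ≠ 0 := by
    intro h
    obtain ⟨h1, h2, h3⟩ := hside' _ m3 _ hs1
    exact hgne _ h1 h2 h3 (by rw [← q3, h]; simp)
  simp only [← sub_eq_add_neg] at e1 e4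
  rw [boxSign, e1, e2, e3, e4]
  have i1 : 2 * p.1 - (p.1 + s) = p.1 - s := by ring
  have i2 : 2 * p.1 - (p.1 - s) = p.1 + s := by ring
  have i3 : 2 * p.2 - (p.2 + s) = p.2 - s := by ring
  have i4 : 2 * p.2 - (p.2 - s) = p.2 + s := by ring
  rw [i1, i2, i3, i4]
  have hI := Complex.I_ne_zero
  have u1 := hune (p.1 + s, p.2 + s)
  have u2 := hune (p.1 + s, p.2 - s)
  have u3 := hune (p.1 - s, p.2 + s)
  have u4 := hune (p.1 - s, p.2 - s)
  have hcalc : (u (p.1 + s, p.2 - s) * r (p.1 + s)) / (u (p.1 - s, p.2 - s) * r (p.1 - s)) *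
      ((u (p.1 + s, p.2 + s) * k (p.2 + s)) / (u (p.1 + s, p.2 - s) * k (p.2 - s))) /
      ((u (p.1 + s, p.2 + s) * (Complex.I * r (p.1 - s))) /
        (u (p.1 - s, p.2 + s) * (Complex.I * r (p.1 + s))) *
      ((u (p.1 - s, p.2 + s) * (Complex.I * k (p.2 - s))) /
        (u (p.1 - s, p.2 - s) * (Complex.I * k (p.2 + s))))) =
      (r (p.1 + s) * k (p.2 + s)) ^ 2 / (r (p.1 - s) * k (p.2 - s)) ^ 2 := by
    field_simp
  rw [hcalc, hrk, neg_div, div_self (pow_ne_zero 2 (mul_ne_zero n1 n3))]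

/-- The zeros of `f` in the open box `(a, b) × (c, d)`. -/
def boxZeros (f : ℝ × ℝ → ℂ) (a b c d : ℝ) : Set (ℝ × ℝ) :=
  {p | p ∈ Ioo a b ×ˢ Ioo c d ∧ f p = 0}

theorem exists_mem_Ioo_notMem {a b : ℝ} (hab : a < b) {S : Set ℝ} (hS : S.Finite) :
    ∃ m ∈ Ioo a b, m ∉ S :=
  (Ioo_infinite hab).exists_notMem_finite hS

theorem boxSign_eq_neg_one {f : ℝ × ℝ → ℂ} (hf : Continuous f) {a b c d : ℝ}
    (hcd : c < d) (hbd : ∀ p ∈ Icc a b ×ˢ Icc c d, f p = 0 → p ∈ Ioo a b ×ˢ Ioo c d)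
    {p : ℝ × ℝ} (hp : boxZeros f a b c d = {p}) (hd : HasInjDeriv f p) :
    boxSign f a b c d = -1 := by
  have hpm : p ∈ boxZeros f a b c d := by rw [hp]; rfl
  obtain ⟨⟨⟨p1, p2⟩, p3, p4⟩, p0⟩ := hpm
  have huniq : ∀ q ∈ Icc a b ×ˢ Icc c d, f q = 0 → q = p := fun q hq h0 ↦ by
    have : q ∈ boxZeros f a b c d := ⟨hbd q hq h0, h0⟩
    rwa [hp] at this
  obtain ⟨δ, hδ, hsign⟩ := hd.exists_boxSign_eq_neg_one hf p0
  set M := min (min (p.1 - a) (b - p.1)) (min (p.2 - c) (d - p.2)) with hM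
  have hM0 : 0 < M := by
    simp only [hM, lt_min_iff]
    refine ⟨⟨?_, ?_⟩, ?_, ?_⟩ <;> linarith
  have m1 : M ≤ p.1 - a := (min_le_left _ _).trans (min_le_left _ _)
  have m2 : M ≤ b - p.1 := (min_le_left _ _).trans (min_le_right _ _)
  have m3 : M ≤ p.2 - c := (min_le_right _ _).trans (min_le_left _ _)
  have m4 : M ≤ d - p.2 := (min_le_right _ _).trans (min_le_right _ _)
  set s := min δ (M / 2) with hs
  have hs0 : 0 < s := lt_min hδ (by linarith)
  have hsM : s ≤ M / 2 := min_le_right _ _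
  have hsub : ∀ {a' b' c' d'}, a ≤ a' → b' ≤ b → c ≤ c' → d' ≤ d → ∀ q ∈ Icc a' b' ×ˢ Icc c' d',
      q ∈ Icc a b ×ˢ Icc c d := fun h1 h2 h3 h4 q hq ↦
    ⟨⟨h1.trans hq.1.1, hq.1.2.trans h2⟩, h3.trans hq.2.1, hq.2.2.trans h4⟩
  have hbd' : ∀ {a' b' c' d'}, a ≤ a' → b' ≤ b → c ≤ c' → d' ≤ d → a' < p.1 → p.1 < b' →
      c' < p.2 → p.2 < d' → ∀ q ∈ Icc a' b' ×ˢ Icc c' d', f q = 0 → q ∈ Ioo a' b' ×ˢ Ioo c' d' := by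
    intro a' b' c' d' h1 h2 h3 h4 h5 h6 h7 h8 q hq h0
    rw [huniq q (hsub h1 h2 h3 h4 q hq) h0]
    exact ⟨⟨h5, h6⟩, h7, h8⟩
  have hone : ∀ {a' b' c' d'}, a ≤ a' → b' ≤ b → c ≤ c' → d' ≤ d → a' ≤ b' → c' ≤ d' →
      p ∉ Icc a' b' ×ˢ Icc c' d' → boxSign f a' b' c' d' = 1 := by
    intro a' b' c' d' h1 h2 h3 h4 h5 h6 h7
    refine boxSign_eq_one h5 h6 hf fun q hq h0 ↦ h7 ?_
    rwa [← huniq q (hsub h1 h2 h3 h4 q hq) h0]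
  rw [← boxSign_mul_left_right (m := p.1 - s) (by linarith) (by linarith) hcd hf hbd
      (fun y hy h0 ↦ by
        have := congrArg Prod.fst (huniq (p.1 - s, y) ⟨⟨by simp only; linarith, by simp only; linarith⟩, hy⟩ h0)
        simp only at this; linarith),
    hone le_rfl (by linarith) le_rfl le_rfl (by linarith) hcd.le
      (fun h ↦ by have := h.1.2; linarith), one_mul,
    ← boxSign_mul_left_right (m := p.1 + s) (by linarith) (by linarith) hcd hf
      (hbd' (by linarith) le_rfl le_rfl le_rfl (by linarith) (by linarith) (by linarith)
        (by linarith))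
      (fun y hy h0 ↦ by
        have := congrArg Prod.fst (huniq (p.1 + s, y) ⟨⟨by simp only; linarith, by simp only; linarith⟩, hy⟩ h0)
        simp only at this; linarith),
    hone (a' := p.1 + s) (by linarith) le_rfl le_rfl le_rfl (by linarith) hcd.le
      (fun h ↦ by have := h.1.1; linarith), mul_one,
    ← boxSign_mul_bottom_top (m := p.2 - s) (by linarith) (by linarith) (by linarith) hf
      (hbd' (by linarith) (by linarith) le_rfl le_rfl (by linarith) (by linarith) (by linarith)
        (by linarith))
      (fun y hy h0 ↦ by
        have := congrArg Prod.snd (huniq (y, p.2 - s)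
          ⟨⟨by linarith [hy.1], by linarith [hy.2]⟩, by simp only; linarith, by simp only; linarith⟩ h0)
        simp only at this; linarith),
    hone (by linarith) (by linarith) le_rfl (by linarith) (by linarith) (by linarith)
      (fun h ↦ by have := h.2.2; linarith), one_mul,
    ← boxSign_mul_bottom_top (m := p.2 + s) (by linarith) (by linarith) (by linarith) hf
      (hbd' (by linarith) (by linarith) (by linarith) le_rfl (by linarith) (by linarith)
        (by linarith) (by linarith))
      (fun y hy h0 ↦ by
        have := congrArg Prod.snd (huniq (y, p.2 + s)
          ⟨⟨by linarith [hy.1], by linarith [hy.2]⟩, by simp only; linarith, by simp only; linarith⟩ h0)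
        simp only at this; linarith),
    hone (c' := p.2 + s) (by linarith) (by linarith) (by linarith) le_rfl (by linarith)
      (by linarith) (fun h ↦ by have := h.2.1; linarith), mul_one]
  exact hsign s hs0 (min_le_left _ _)

theorem boxSign_eq_neg_one_pow {f : ℝ × ℝ → ℂ} (hf : Continuous f)
    (hd : ∀ p, f p = 0 → HasInjDeriv f p) (n : ℕ) : ∀ {a b c d : ℝ}, a < b → c < d →
    (∀ p ∈ Icc a b ×ˢ Icc c d, f p = 0 → p ∈ Ioo a b ×ˢ Ioo c d) →
    (boxZeros f a b c d).Finite → (boxZeros f a b c d).ncard = n →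
    boxSign f a b c d = (-1) ^ n := by
  induction n using Nat.strong_induction_on with
  | _ n ih =>
  intro a b c d hab hcd hbd hfin hn
  rcases Nat.lt_or_ge n 2 with hn2 | hn2
  · interval_cases n
    · rw [Set.ncard_eq_zero hfin] at hn
      rw [pow_zero]
      refine boxSign_eq_one hab.le hcd.le hf fun p hp h0 ↦ ?_
      have : p ∈ boxZeros f a b c d := ⟨hbd p hp h0, h0⟩
      simp [hn] at this
    · obtain ⟨p, hp⟩ := Set.ncard_eq_one.1 hn
      have hpm : p ∈ boxZeros f a b c d := by rw [hp]; rfl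
      rw [pow_one]
      exact boxSign_eq_neg_one hf hcd hbd hp (hd p hpm.2)
  have key : ∀ Z1 Z2 : Set (ℝ × ℝ), Z1 ∪ Z2 = boxZeros f a b c d → Disjoint Z1 Z2 →
      Z1.Nonempty → Z2.Nonempty → Z1.Finite ∧ Z2.Finite ∧ Z1.ncard < n ∧ Z2.ncard < n ∧
        Z1.ncard + Z2.ncard = n := by
    intro Z1 Z2 hU hdisj hne1 hne2
    have f1 : Z1.Finite := hfin.subset (hU ▸ subset_union_left)
    have f2 : Z2.Finite := hfin.subset (hU ▸ subset_union_right)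
    have h1 := (Set.ncard_pos f1).2 hne1
    have h2 := (Set.ncard_pos f2).2 hne2
    have h3 := Set.ncard_union_eq hdisj f1 f2
    rw [hU, hn] at h3
    refine ⟨f1, f2, ?_, ?_, h3.symm⟩ <;> omega
  have hvert : ∀ p ∈ boxZeros f a b c d, ∀ q ∈ boxZeros f a b c d, p.1 < q.1 →
      boxSign f a b c d = (-1) ^ n := by
    intro p hp q hq hpq
    obtain ⟨m, hm, hmZ⟩ := exists_mem_Ioo_notMem hpq (hfin.image Prod.fst)
    have hmz : ∀ y ∈ Icc c d, f (m, y) ≠ 0 := fun y hy h0 ↦ hmZ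
      ⟨(m, y), ⟨hbd (m, y) ⟨⟨(hp.1.1.1.trans hm.1).le, (hm.2.trans hq.1.1.2).le⟩, hy⟩ h0, h0⟩, rfl⟩
    have ham : a < m := hp.1.1.1.trans hm.1
    have hmb : m < b := hm.2.trans hq.1.1.2
    obtain ⟨f1, f2, l1, l2, hsum⟩ := key (boxZeros f a m c d) (boxZeros f m b c d) (by
        ext r
        constructor
        · rintro (h | h)
          · exact ⟨⟨⟨h.1.1.1, h.1.1.2.trans hmb⟩, h.1.2⟩, h.2⟩
          · exact ⟨⟨⟨ham.trans h.1.1.1, h.1.1.2⟩, h.1.2⟩, h.2⟩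
        · intro h
          rcases lt_trichotomy r.1 m with h1 | h1 | h1
          · exact Or.inl ⟨⟨⟨h.1.1.1, h1⟩, h.1.2⟩, h.2⟩
          · exact absurd h.2 (by
              rw [← Prod.mk.eta (p := r), h1]
              exact hmz _ ⟨h.1.2.1.le, h.1.2.2.le⟩)
          · exact Or.inr ⟨⟨⟨h1, h.1.1.2⟩, h.1.2⟩, h.2⟩)
      (Set.disjoint_left.2 fun r h1 h2 ↦ lt_asymm h1.1.1.2 h2.1.1.1)
      ⟨p, ⟨⟨hp.1.1.1, hm.1⟩, hp.1.2⟩, hp.2⟩ ⟨q, ⟨⟨hm.2, hq.1.1.2⟩, hq.1.2⟩, hq.2⟩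
    rw [← boxSign_mul_left_right ham hmb hcd hf hbd hmz,
      ih _ l1 ham hcd (fun r hr h0 ↦ by
        have := hbd r ⟨⟨hr.1.1, hr.1.2.trans hmb.le⟩, hr.2⟩ h0
        refine ⟨⟨this.1.1, lt_of_le_of_ne hr.1.2 fun h ↦ ?_⟩, this.2⟩
        exact hmz r.2 hr.2 (by rw [← h]; exact h0)) f1 rfl,
      ih _ l2 hmb hcd (fun r hr h0 ↦ by
        have := hbd r ⟨⟨ham.le.trans hr.1.1, hr.1.2⟩, hr.2⟩ h0
        refine ⟨⟨lt_of_le_of_ne hr.1.1 fun h ↦ ?_, this.1.2⟩, this.2⟩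
        exact hmz r.2 hr.2 (by rw [h]; exact h0)) f2 rfl, ← pow_add, hsum]
  have hhor : ∀ p ∈ boxZeros f a b c d, ∀ q ∈ boxZeros f a b c d, p.2 < q.2 →
      boxSign f a b c d = (-1) ^ n := by
    intro p hp q hq hpq
    obtain ⟨m, hm, hmZ⟩ := exists_mem_Ioo_notMem hpq (hfin.image Prod.snd)
    have hmz : ∀ y ∈ Icc a b, f (y, m) ≠ 0 := fun y hy h0 ↦ hmZ
      ⟨(y, m), ⟨hbd (y, m) ⟨hy, (hp.1.2.1.trans hm.1).le, (hm.2.trans hq.1.2.2).le⟩ h0, h0⟩, rfl⟩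
    have hcm : c < m := hp.1.2.1.trans hm.1
    have hmd : m < d := hm.2.trans hq.1.2.2
    obtain ⟨f1, f2, l1, l2, hsum⟩ := key (boxZeros f a b c m) (boxZeros f a b m d) (by
        ext r
        constructor
        · rintro (h | h)
          · exact ⟨⟨h.1.1, h.1.2.1, h.1.2.2.trans hmd⟩, h.2⟩
          · exact ⟨⟨h.1.1, hcm.trans h.1.2.1, h.1.2.2⟩, h.2⟩
        · intro h
          rcases lt_trichotomy r.2 m with h1 | h1 | h1
          · exact Or.inl ⟨⟨h.1.1, h.1.2.1, h1⟩, h.2⟩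
          · exact absurd h.2 (by
              rw [← Prod.mk.eta (p := r), h1]
              exact hmz _ ⟨h.1.1.1.le, h.1.1.2.le⟩)
          · exact Or.inr ⟨⟨h.1.1, h1, h.1.2.2⟩, h.2⟩)
      (Set.disjoint_left.2 fun r h1 h2 ↦ lt_asymm h1.1.2.2 h2.1.2.1)
      ⟨p, ⟨hp.1.1, hp.1.2.1, hm.1⟩, hp.2⟩ ⟨q, ⟨hq.1.1, hm.2, hq.1.2.2⟩, hq.2⟩
    rw [← boxSign_mul_bottom_top hcm hmd hab hf hbd hmz,
      ih _ l1 hab hcm (fun r hr h0 ↦ by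
        have := hbd r ⟨hr.1, hr.2.1, hr.2.2.trans hmd.le⟩ h0
        refine ⟨this.1, this.2.1, lt_of_le_of_ne hr.2.2 fun h ↦ ?_⟩
        exact hmz r.1 hr.1 (by rw [← h]; exact h0)) f1 rfl,
      ih _ l2 hab hmd (fun r hr h0 ↦ by
        have := hbd r ⟨hr.1, hcm.le.trans hr.2.1, hr.2.2⟩ h0
        refine ⟨this.1, lt_of_le_of_ne hr.2.1 fun h ↦ ?_, this.2.2⟩
        exact hmz r.1 hr.1 (by rw [h]; exact h0)) f2 rfl, ← pow_add, hsum]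
  obtain ⟨p, hp, q, hq, hpq⟩ := (Set.one_lt_ncard hfin).1 (by omega)
  rcases lt_trichotomy p.1 q.1 with h | h | h
  · exact hvert p hp q hq h
  · rcases lt_trichotomy p.2 q.2 with h' | h' | h'
    · exact hhor p hp q hq h'
    · exact absurd (Prod.ext h h') hpq
    · exact hhor q hq p hp h'
  · exact hvert q hq p hp h

theorem sqrtRatio_eq_one {g : ℝ → ℂ} {a b : ℝ} (hab : a ≤ b) (hg : Continuous g)
    (hper : g b = g a) {σ : ℝ} (hσ : ∀ t, 0 < σ * (g t).re) : sqrtRatio g a b = 1 := by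
  have hσ0 : σ ≠ 0 := by
    rintro rfl
    simpa using hσ 0
  have hgne : ∀ t, g t ≠ 0 := fun t h ↦ by simpa [h] using hσ t
  have hslit : ∀ t, (σ : ℂ) * g t ∈ Complex.slitPlane := fun t ↦ by
    refine Or.inl ?_
    rw [Complex.re_ofReal_mul]
    exact hσ t
  obtain ⟨k, hk⟩ := IsAlgClosed.exists_pow_nat_eq (σ : ℂ)⁻¹ two_pos
  have hk0 : k ≠ 0 := by
    rintro rfl
    simp [eq_comm, hσ0] at hk
  rw [sqrtRatio_eq (r := fun t ↦ k * Complex.exp (Complex.log (σ * g t) / 2)) hab ?_ ?_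
    (fun t _ ↦ hgne t), hper, div_self (mul_ne_zero hk0 (Complex.exp_ne_zero _))]
  · refine (Continuous.continuousOn ?_)
    exact continuous_const.mul (Complex.continuous_exp.comp
      (((continuous_const.mul hg).clog hslit).div_const _))
  · intro t _
    rw [mul_pow, hk, ← Complex.exp_nat_mul, Nat.cast_ofNat, mul_div_cancel₀ _ two_ne_zero,
      Complex.exp_log (Complex.slitPlane_ne_zero (hslit t)),
      inv_mul_cancel_left₀ (by exact_mod_cast hσ0)]

theorem finite_zeros_inter_compact {f : ℝ × ℝ → ℂ} (hf : Continuous f)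
    (hd : ∀ p, f p = 0 → HasInjDeriv f p) {K : Set (ℝ × ℝ)} (hK : IsCompact K) :
    {p | p ∈ K ∧ f p = 0}.Finite := by
  by_contra hinf
  obtain ⟨p, -, hacc⟩ := Set.Infinite.exists_accPt_of_subset_isCompact hinf hK fun p hp ↦ hp.1
  have hcl : IsClosed {p | f p = 0} := isClosed_eq hf continuous_const
  rw [accPt_iff_frequently] at hacc
  have hp0 : f p = 0 := hcl.mem_of_frequently_of_tendsto (hacc.mono fun q hq ↦ hq.2.2) tendsto_id
  obtain ⟨δ, hδ, hne⟩ := (hd p hp0).exists_forall_ne_zero hp0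
  refine hacc ?_
  filter_upwards [Metric.closedBall_mem_nhds p hδ] with q hq h
  refine hne (q - p) (by rwa [← dist_eq_norm]) (sub_ne_zero.2 h.1) ?_
  rw [add_sub_cancel]
  exact h.2.2

/-- Nondegenerate zeros on a closed cylinder of a map whose first component has opposite signs on
the two boundary circles are even in number. -/
theorem even_ncard_boxZeros {f : ℝ × ℝ → ℂ} (hf : Continuous f)
    (hd : ∀ p, f p = 0 → HasInjDeriv f p) (hper : ∀ x y, f (x + 1, y) = f (x, y))
    {a c d : ℝ} (hcd : c < d) (ha : ∀ y, f (a, y) ≠ 0) (hc : ∀ x, (f (x, c)).re < 0)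
    (hdpos : ∀ x, 0 < (f (x, d)).re) :
    (boxZeros f a (a + 1) c d).Finite ∧ Even (boxZeros f a (a + 1) c d).ncard := by
  have hab : a < a + 1 := by linarith
  have hbd : ∀ p ∈ Icc a (a + 1) ×ˢ Icc c d, f p = 0 → p ∈ Ioo a (a + 1) ×ˢ Ioo c d := by
    rintro ⟨x, y⟩ ⟨⟨h1, h2⟩, h3, h4⟩ h0
    refine ⟨⟨lt_of_le_of_ne h1 ?_, lt_of_le_of_ne h2 ?_⟩, lt_of_le_of_ne h3 ?_,
      lt_of_le_of_ne h4 ?_⟩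
    · rintro h; exact ha y (by rw [h]; exact h0)
    · rintro h; exact ha y (by rw [← hper, ← h]; exact h0)
    · rintro h; have := hc x; simp only at h; rw [h, h0] at this; simp at this
    · rintro h; have := hdpos x; simp only at h; rw [← h, h0] at this; simp at this
  have hfin : (boxZeros f a (a + 1) c d).Finite :=
    (finite_zeros_inter_compact hf hd (isCompact_Icc.prod isCompact_Icc)).subset
      fun p hp ↦ ⟨⟨Ioo_subset_Icc_self hp.1.1, Ioo_subset_Icc_self hp.1.2⟩, hp.2⟩
  refine ⟨hfin, ?_⟩
  have h1 := boxSign_eq_neg_one_pow hf hd _ hab hcd hbd hfin rfl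
  rw [boxSign, sqrtRatio_eq_one (σ := -1) hab.le (by fun_prop) (hper a c)
      (fun t ↦ by have := hc t; linarith),
    sqrtRatio_eq_one (σ := 1) hab.le (by fun_prop) (hper a d)
      (fun t ↦ by have := hdpos t; linarith), one_mul, one_mul] at h1
  simp only [hper] at h1
  rw [div_self (sqrtRatio_ne_zero hcd.le (by fun_prop) fun t _ ↦ ha t)] at h1
  by_contra hodd
  rw [Nat.not_even_iff_odd] at hodd
  rw [hodd.neg_one_pow] at h1
  norm_num at h1

section GlobalODE

variable {E : Type*} [NormedAddCommGroup E] [NormedSpace ℝ E] {v : ℝ → E → E} {K : ℝ≥0}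

/-- Integral curves on adjacent intervals that agree at the common end point can be glued. -/
theorem IsIntegralCurveOn.glue {z w : ℝ → E} {a b c : ℝ} (hab : a ≤ b) (hbc : b ≤ c)
    (hz : IsIntegralCurveOn z v (Icc a b)) (hw : IsIntegralCurveOn w v (Icc b c))
    (h : z b = w b) :
    IsIntegralCurveOn (fun t ↦ if t ≤ b then z t else w t) v (Icc a c) := by
  set y : ℝ → E := fun t ↦ if t ≤ b then z t else w t with hy
  have hyz : ∀ t ≤ b, y t = z t := fun t ht ↦ if_pos ht
  have hyw : ∀ t, b ≤ t → y t = w t := fun t ht ↦ by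
    rcases ht.eq_or_lt with rfl | ht
    · rw [hyz _ le_rfl, h]
    · exact if_neg (not_le.2 ht)
  have h1 : ∀ t ∈ Icc a b, HasDerivWithinAt y (v t (y t)) (Icc a b) t := fun t ht ↦ by
    rw [hyz t ht.2]
    exact (hz t ht).congr (fun s hs ↦ hyz s hs.2) (hyz t ht.2)
  have h2 : ∀ t ∈ Icc b c, HasDerivWithinAt y (v t (y t)) (Icc b c) t := fun t ht ↦ by
    rw [hyw t ht.1]
    exact (hw t ht).congr (fun s hs ↦ hyw s hs.1) (hyw t ht.1)
  intro t ht
  rw [← Icc_union_Icc_eq_Icc hab hbc]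
  rcases lt_trichotomy t b with htb | rfl | htb
  · refine (h1 t ⟨ht.1, htb.le⟩).mono_of_mem_nhdsWithin ?_
    rw [Icc_union_Icc_eq_Icc hab hbc]
    filter_upwards [self_mem_nhdsWithin, mem_nhdsWithin_of_mem_nhds (Iio_mem_nhds htb)]
      with s hs hs' using ⟨hs.1, le_of_lt hs'⟩
  · exact (h1 t ⟨ht.1, le_rfl⟩).union (h2 t ⟨le_rfl, ht.2⟩)
  · refine (h2 t ⟨htb.le, ht.2⟩).mono_of_mem_nhdsWithin ?_
    rw [Icc_union_Icc_eq_Icc hab hbc]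
    filter_upwards [self_mem_nhdsWithin, mem_nhdsWithin_of_mem_nhds (Ioi_mem_nhds htb)]
      with s hs hs' using ⟨le_of_lt hs', hs.2⟩

variable [CompleteSpace E]

/-- Local existence with a step size that only depends on the Lipschitz constant. -/
theorem exists_isIntegralCurveOn_step (hv : ∀ t, LipschitzWith K (v t))
    (hvc : Continuous (Function.uncurry v)) (t₀ : ℝ) (z₀ : E) :
    ∃ z : ℝ → E, z t₀ = z₀ ∧
      IsIntegralCurveOn z v (Icc (t₀ - 1 / (2 * (K + 1))) (t₀ + 1 / (2 * (K + 1)))) := by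
  set ε : ℝ := 1 / (2 * (K + 1)) with hε
  have hε0 : 0 < ε := by positivity
  have hKε : K * ε ≤ 1 / 2 := by
    rw [hε, mul_one_div, div_le_div_iff₀ (by positivity) (by positivity)]
    nlinarith
  obtain ⟨C, hC⟩ := (isCompact_Icc (a := t₀ - ε) (b := t₀ + ε)).exists_bound_of_continuousOn
    (f := fun t ↦ v t z₀) (by fun_prop)
  have hC0 : 0 ≤ C := (norm_nonneg _).trans (hC t₀ ⟨by linarith, by linarith⟩)
  refine IsPicardLindelof.exists_eq_forall_mem_Icc_hasDerivWithinAt₀ (K := K)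
    (t₀ := ⟨t₀, by linarith, by linarith⟩) (a := ⟨2 * C * ε, by positivity⟩)
    (L := ⟨C + K * (2 * C * ε), by positivity⟩)
    ⟨fun t _ ↦ (hv t).lipschitzOnWith, fun x _ ↦ by fun_prop, fun t ht x hx ↦ ?_, ?_⟩
  · have h1 := (hv t).dist_le_mul x z₀
    have h2 : dist x z₀ ≤ 2 * C * ε := hx
    have h3 := norm_le_norm_add_norm_sub' (v t x) (v t z₀)
    rw [dist_eq_norm] at h1
    have h4 : (K : ℝ) * dist x z₀ ≤ K * (2 * C * ε) := by gcongr
    change _ ≤ C + K * (2 * C * ε)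
    linarith [hC t ht]
  · have : max (t₀ + ε - t₀) (t₀ - (t₀ - ε)) = ε := by
      rw [add_sub_cancel_left, sub_sub_cancel, max_self]
    change (C + K * (2 * C * ε)) * max (t₀ + ε - t₀) (t₀ - (t₀ - ε)) ≤ 2 * C * ε - 0
    rw [this]
    have : K * ε * (2 * C * ε) ≤ 1 / 2 * (2 * C * ε) := by gcongr
    nlinarith

/-- A continuous vector field which is uniformly Lipschitz in space has global integral curves. -/
theorem exists_isIntegralCurve (hv : ∀ t, LipschitzWith K (v t))
    (hvc : Continuous (Function.uncurry v)) (z₀ : E) :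
    ∃ z : ℝ → E, z 0 = z₀ ∧ IsIntegralCurve z v := by
  set ε : ℝ := 1 / (2 * (K + 1)) with hε
  have hε0 : 0 < ε := by positivity
  have hZ : ∀ n : ℕ, ∃ z : ℝ → E, z 0 = z₀ ∧ IsIntegralCurveOn z v (Icc (-(n * ε)) (n * ε)) := by
    intro n
    induction n with
    | zero =>
      refine ⟨fun _ ↦ z₀, rfl, fun t ht ↦ ?_⟩
      have : Icc (-(((0 : ℕ) : ℝ) * ε)) ((0 : ℕ) * ε) = {0} := by simp
      rw [this]
      exact hasDerivWithinAt_iff_hasFDerivWithinAt.2 (.of_subsingleton subsingleton_singleton)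
    | succ n ih =>
      obtain ⟨z, hz0, hz⟩ := ih
      have hn : 0 ≤ n * ε := by positivity
      obtain ⟨w, hw0, hw⟩ := exists_isIntegralCurveOn_step hv hvc (n * ε) (z (n * ε))
      obtain ⟨u, hu0, hu⟩ := exists_isIntegralCurveOn_step hv hvc (-(n * ε)) (z (-(n * ε)))
      have h1 := hz.glue (c := n * ε + ε) (by linarith) (by linarith)
        (fun t ht ↦ (hw t ⟨by linarith [ht.1], ht.2⟩).mono
          (Icc_subset_Icc_left (by linarith))) hw0.symm
      have h2 := IsIntegralCurveOn.glue (a := -(n * ε) - ε) (b := -(n * ε)) (by linarith)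
        (by linarith)
        (fun t ht ↦ (hu t ⟨ht.1, by linarith [ht.2]⟩).mono
          (Icc_subset_Icc_right (by linarith))) h1 (by
          rw [hu0, if_pos (by linarith)])
      have he : Icc (-(((n + 1 : ℕ) : ℝ) * ε)) ((n + 1 : ℕ) * ε) =
          Icc (-(n * ε) - ε) (n * ε + ε) := by
        push_cast
        ring_nf
      refine ⟨fun t ↦ if t ≤ -(n * ε) then u t else if t ≤ n * ε then z t else w t, ?_, he ▸ h2⟩
      rcases hn.eq_or_lt with h0 | h0
      · rw [← h0, neg_zero] at hu0
        rw [← h0]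
        simp [hu0, hz0]
      · exact (if_neg (by linarith)).trans ((if_pos h0.le).trans hz0)
  choose Z hZ0 hZ using hZ
  have hderiv : ∀ n : ℕ, ∀ t ∈ Ioo (-(n * ε)) (n * ε), HasDerivAt (Z n) (v t (Z n t)) t :=
    fun n t ht ↦ (hZ n t (Ioo_subset_Icc_self ht)).hasDerivAt (Icc_mem_nhds ht.1 ht.2)
  have huniq : ∀ m n : ℕ, m ≤ n → ∀ t, |t| < m * ε → Z m t = Z n t := by
    intro m n hmn t ht
    have hsub : (m : ℝ) * ε ≤ n * ε := by gcongr
    rw [abs_lt] at ht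
    refine ODE_solution_unique_of_mem_Ioo (v := v) (s := fun _ ↦ univ) (t₀ := 0) (K := K)
      (fun t _ ↦ (hv t).lipschitzOnWith) ⟨by linarith, by linarith⟩
      (fun s hs ↦ ⟨hderiv m s hs, mem_univ _⟩)
      (fun s hs ↦ ⟨hderiv n s ⟨by linarith [hs.1], by linarith [hs.2]⟩, mem_univ _⟩)
      ((hZ0 m).trans (hZ0 n).symm) ht
  obtain ⟨N, hN⟩ : ∃ N : ℝ → ℕ, ∀ t, |t| < N t * ε := by
    choose N hN using fun t : ℝ ↦ exists_nat_gt (|t| / ε)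
    exact ⟨N, fun t ↦ (div_lt_iff₀ hε0).1 (hN t)⟩
  have hval : ∀ (n : ℕ) (t : ℝ), |t| < n * ε → Z (N t) t = Z n t := fun n t ht ↦ by
    rcases le_total (N t) n with h | h
    · exact huniq _ _ h t (hN t)
    · exact (huniq _ _ h t ht).symm
  refine ⟨fun t ↦ Z (N t) t, hZ0 _, fun t ↦ ?_⟩
  refine (hderiv (N t) t (abs_lt.1 (hN t))).congr_of_eventuallyEq ?_
  filter_upwards [continuous_abs.continuousAt.eventually_lt_const (hN t)] with s hs
    using hval _ s hs

end GlobalODE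

section SecondOrder

/-- The first order system on phase space associated with `ẍ + W(t, x) = 0`. -/
def secondOrderField (W : ℝ → ℝ → ℝ) (t : ℝ) (p : ℝ × ℝ) : ℝ × ℝ :=
  (p.2, -W t p.1)

theorem continuous_uncurry_secondOrderField {W : ℝ → ℝ → ℝ}
    (hW : Continuous (Function.uncurry W)) :
    Continuous (Function.uncurry (secondOrderField W)) := by
  have : Continuous fun q : ℝ × ℝ × ℝ ↦ Function.uncurry W (q.1, q.2.1) :=
    hW.comp (by fun_prop)
  exact (continuous_snd.comp continuous_snd).prodMk this.neg

theorem lipschitzWith_secondOrderField {W : ℝ → ℝ → ℝ} {L : ℝ≥0} {t : ℝ}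
    (hW : LipschitzWith L (W t)) : LipschitzWith (1 + L) (secondOrderField W t) := by
  refine LipschitzWith.of_dist_le_mul fun p q ↦ ?_
  have h1 := hW.dist_le_mul p.1 q.1
  have h2 : dist p.1 q.1 ≤ dist p q := le_max_left _ _
  have h3 : dist p.2 q.2 ≤ dist p q := le_max_right _ _
  have h4 : (0 : ℝ) ≤ dist p q := dist_nonneg
  have h5 : (L : ℝ) * dist p.1 q.1 ≤ L * dist p q := by gcongr
  have h6 : 0 ≤ (L : ℝ) * dist p q := by positivity
  push_cast
  refine max_le (by simp only [secondOrderField]; linarith) ?_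
  simp only [secondOrderField, dist_neg_neg]
  linarith

variable {W : ℝ → ℝ → ℝ} {z w : ℝ → ℝ × ℝ}

theorem IsIntegralCurve.hasDerivAt_fst (hz : IsIntegralCurve z (secondOrderField W)) (t : ℝ) :
    HasDerivAt (fun t ↦ (z t).1) (z t).2 t :=
  (ContinuousLinearMap.fst ℝ ℝ ℝ).hasFDerivAt.comp_hasDerivAt t (hz t)

theorem IsIntegralCurve.hasDerivAt_snd (hz : IsIntegralCurve z (secondOrderField W)) (t : ℝ) :
    HasDerivAt (fun t ↦ (z t).2) (-W t (z t).1) t :=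
  (ContinuousLinearMap.snd ℝ ℝ ℝ).hasFDerivAt.comp_hasDerivAt t (hz t)

theorem isIntegralCurve_secondOrderField (h1 : ∀ t, HasDerivAt (fun t ↦ (z t).1) (z t).2 t)
    (h2 : ∀ t, HasDerivAt (fun t ↦ (z t).2) (-W t (z t).1) t) :
    IsIntegralCurve z (secondOrderField W) :=
  fun t ↦ (h1 t).prodMk (h2 t)

theorem IsIntegralCurve.deriv_fst (hz : IsIntegralCurve z (secondOrderField W)) :
    deriv (fun t ↦ (z t).1) = fun t ↦ (z t).2 :=
  funext fun t ↦ (hz.hasDerivAt_fst t).deriv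

theorem IsIntegralCurve.deriv_deriv_fst (hz : IsIntegralCurve z (secondOrderField W)) (t : ℝ) :
    deriv (deriv fun t ↦ (z t).1) t = -W t (z t).1 := by
  rw [hz.deriv_fst]
  exact (hz.hasDerivAt_snd t).deriv

theorem IsIntegralCurve.continuous' (hz : IsIntegralCurve z (secondOrderField W)) :
    Continuous z :=
  continuous_iff_continuousAt.2 fun t ↦ (hz t).continuousAt

theorem IsIntegralCurve.contDiff_two_fst (hW : Continuous (Function.uncurry W))
    (hz : IsIntegralCurve z (secondOrderField W)) : ContDiff ℝ 2 fun t ↦ (z t).1 := by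
  have h1 : ContDiff ℝ 1 fun t ↦ (z t).2 := by
    rw [contDiff_one_iff_deriv]
    refine ⟨fun t ↦ (hz.hasDerivAt_snd t).differentiableAt, ?_⟩
    rw [funext fun t ↦ (hz.hasDerivAt_snd t).deriv]
    exact (hW.comp (continuous_id.prodMk (continuous_fst.comp hz.continuous'))).neg
  rw [show (2 : WithTop ℕ∞) = 1 + 1 by norm_num, contDiff_succ_iff_deriv]
  refine ⟨fun t ↦ (hz.hasDerivAt_fst t).differentiableAt, by simp, ?_⟩
  rwa [hz.deriv_fst]

/-- A `C²` solution of `ẍ + W(t, x) = 0` gives an integral curve in phase space. -/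
theorem isIntegralCurve_of_contDiff {x : ℝ → ℝ} (hx : ContDiff ℝ 2 x)
    (h : ∀ t, deriv (deriv x) t + W t (x t) = 0) :
    IsIntegralCurve (fun t ↦ (x t, deriv x t)) (secondOrderField W) := by
  rw [show (2 : WithTop ℕ∞) = 1 + 1 by norm_num, contDiff_succ_iff_deriv] at hx
  refine isIntegralCurve_secondOrderField (fun t ↦ (hx.1 t).hasDerivAt) fun t ↦ ?_
  have := (hx.2.2.differentiable one_ne_zero t).hasDerivAt
  rwa [eq_neg_of_add_eq_zero_left (h t)] at this

theorem IsIntegralCurve.eq_of_eq_at {L : ℝ≥0} (hL : ∀ t, LipschitzWith L (W t))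
    (hz : IsIntegralCurve z (secondOrderField W)) (hw : IsIntegralCurve w (secondOrderField W))
    {t : ℝ} (h : z t = w t) : z = w :=
  ODE_solution_unique_univ (s := fun _ ↦ univ)
    (fun t ↦ (lipschitzWith_secondOrderField (hL t)).lipschitzOnWith)
    (fun t ↦ ⟨hz t, mem_univ _⟩) (fun t ↦ ⟨hw t, mem_univ _⟩) h

theorem IsIntegralCurve.comp_add_period {T : ℝ} (hT : ∀ t x, W (t + T) x = W t x)
    (hz : IsIntegralCurve z (secondOrderField W)) :
    IsIntegralCurve (fun t ↦ z (t + T)) (secondOrderField W) := fun t ↦ by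
  have := (hz (t + T)).comp_add_const t T
  simpa only [secondOrderField, hT] using this

theorem IsIntegralCurve.add_int {k : ℝ} (hk : ∀ t x, W t (x + k) = W t x)
    (hz : IsIntegralCurve z (secondOrderField W)) :
    IsIntegralCurve (fun t ↦ z t + (k, 0)) (secondOrderField W) := fun t ↦ by
  have := (hz t).add_const (k, (0 : ℝ))
  simpa only [secondOrderField, Prod.snd_add, Prod.fst_add, add_zero, hk] using this

end SecondOrder

/-- `W` is a bounded `T`-periodic force on the circle, with continuous space derivative `D`. -/
structure IsPeriodicForce (W D : ℝ → ℝ → ℝ) (T : ℝ) (M : ℝ) (L : ℝ≥0) : Prop where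
  period_pos : 0 < T
  continuous : Continuous (Function.uncurry W)
  continuous_deriv : Continuous (Function.uncurry D)
  hasDerivAt : ∀ t x, HasDerivAt (W t) (D t x) x
  norm_le : ∀ t x, |W t x| ≤ M
  norm_deriv_le : ∀ t x, |D t x| ≤ L
  add_one : ∀ t x, W t (x + 1) = W t x
  add_period : ∀ t x, W (t + T) x = W t x

namespace IsPeriodicForce

variable {W D : ℝ → ℝ → ℝ} {T M : ℝ} {L : ℝ≥0} (h : IsPeriodicForce W D T M L)
include h

theorem add_int (m : ℤ) (t x : ℝ) : W t (x + m) = W t x := by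
  have : Function.Periodic (W t) 1 := h.add_one t
  simpa using this.int_mul m x

theorem deriv_add_period (t x : ℝ) : D (t + T) x = D t x := by
  have h1 := h.hasDerivAt (t + T) x
  rw [show W (t + T) = W t from funext (h.add_period t)] at h1
  exact h1.unique (h.hasDerivAt t x)

theorem deriv_add_int (m : ℤ) (t x : ℝ) : D t (x + m) = D t x := by
  have h1 := (h.hasDerivAt t (x + m)).comp_add_const x m
  rw [funext (h.add_int m t)] at h1
  exact h1.unique (h.hasDerivAt t x)

theorem lipschitzWith (t : ℝ) : LipschitzWith L (W t) :=
  lipschitzWith_of_nnnorm_deriv_le (fun x ↦ (h.hasDerivAt t x).differentiableAt) fun x ↦ by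
    rw [(h.hasDerivAt t x).deriv]
    exact h.norm_deriv_le t x

theorem exists_flow (p : ℝ × ℝ) :
    ∃ z : ℝ → ℝ × ℝ, z 0 = p ∧ IsIntegralCurve z (secondOrderField W) :=
  exists_isIntegralCurve (fun t ↦ lipschitzWith_secondOrderField (h.lipschitzWith t))
    (continuous_uncurry_secondOrderField h.continuous) p

/-- The solution starting at the phase point `p` at time `0`. -/
noncomputable def flow (p : ℝ × ℝ) : ℝ → ℝ × ℝ :=
  (h.exists_flow p).choose

@[simp]
theorem flow_zero (p : ℝ × ℝ) : h.flow p 0 = p :=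
  (h.exists_flow p).choose_spec.1

theorem isIntegralCurve_flow (p : ℝ × ℝ) : IsIntegralCurve (h.flow p) (secondOrderField W) :=
  (h.exists_flow p).choose_spec.2

theorem eq_flow {z : ℝ → ℝ × ℝ} (hz : IsIntegralCurve z (secondOrderField W)) {p : ℝ × ℝ}
    (hp : z 0 = p) : z = h.flow p :=
  hz.eq_of_eq_at h.lipschitzWith (h.isIntegralCurve_flow p) (t := 0) (by rw [hp, flow_zero])

theorem flow_add_int (p : ℝ × ℝ) (m : ℤ) (t : ℝ) :
    h.flow (p + ((m : ℝ), 0)) t = h.flow p t + ((m : ℝ), 0) :=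
  congrFun (h.eq_flow ((h.isIntegralCurve_flow p).add_int (h.add_int m)) (by simp)).symm t

theorem flow_add_period (p : ℝ × ℝ) (t : ℝ) : h.flow p (t + T) = h.flow (h.flow p T) t :=
  congrFun (h.eq_flow ((h.isIntegralCurve_flow p).comp_add_period h.add_period) (by simp)) t

theorem dist_flow_le (p q : ℝ × ℝ) {t : ℝ} (ht : t ∈ Icc 0 T) :
    dist (h.flow p t) (h.flow q t) ≤ dist p q * Real.exp ((1 + L) * T) := by
  have := dist_le_of_trajectories_ODE (a := 0) (b := T) (δ := dist p q)
    (fun t ↦ lipschitzWith_secondOrderField (h.lipschitzWith t))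
    (h.isIntegralCurve_flow p).continuous'.continuousOn
    (fun t _ ↦ (h.isIntegralCurve_flow p t).hasDerivWithinAt)
    (h.isIntegralCurve_flow q).continuous'.continuousOn
    (fun t _ ↦ (h.isIntegralCurve_flow q t).hasDerivWithinAt) (by simp) t ht
  refine this.trans ?_
  push_cast
  rw [sub_zero]
  gcongr
  exact ht.2

theorem continuous_flow_period : Continuous fun p ↦ h.flow p T := by
  refine (LipschitzWith.of_dist_le_mul (K := ⟨Real.exp ((1 + L) * T), (Real.exp_pos _).le⟩)
    fun p q ↦ ?_).continuous
  rw [mul_comm]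
  exact h.dist_flow_le p q ⟨h.period_pos.le, le_rfl⟩

/-- The zeros of the shooting map are the initial data of solutions winding `k` times in
time `T`. -/
noncomputable def shooting (k : ℤ) (p : ℝ × ℝ) : ℂ :=
  ⟨(h.flow p T).1 - p.1 - k, (h.flow p T).2 - p.2⟩

theorem continuous_shooting (k : ℤ) : Continuous (h.shooting k) := by
  have h1 := h.continuous_flow_period
  have : h.shooting k = fun p ↦ (((h.flow p T).1 - p.1 - k : ℝ) : ℂ) +
      (((h.flow p T).2 - p.2 : ℝ) : ℂ) * Complex.I := by
    funext p
    exact Complex.mk_eq_add_mul_I _ _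
  rw [this]
  fun_prop

theorem shooting_eq_zero_iff {k : ℤ} {p : ℝ × ℝ} :
    h.shooting k p = 0 ↔ h.flow p T = p + ((k : ℝ), 0) := by
  simp only [shooting, Complex.ext_iff, Complex.zero_re, Complex.zero_im, Prod.ext_iff,
    Prod.fst_add, Prod.snd_add, add_zero, sub_eq_iff_eq_add']

theorem shooting_add_int (k m : ℤ) (x y : ℝ) : h.shooting k (x + m, y) = h.shooting k (x, y) := by
  have := h.flow_add_int (x, y) m T
  simp only [Prod.mk_add_mk, add_zero] at this
  simp only [shooting, this, Prod.fst_add, Prod.snd_add, add_zero]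
  congr 1
  ring

theorem flow_add_period_of_shooting {k : ℤ} {p : ℝ × ℝ} (hp : h.shooting k p = 0) (t : ℝ) :
    h.flow p (t + T) = h.flow p t + ((k : ℝ), 0) := by
  rw [h.flow_add_period, h.shooting_eq_zero_iff.1 hp, h.flow_add_int]

theorem abs_flow_snd_sub_le (p : ℝ × ℝ) {t : ℝ} (ht : t ∈ Icc 0 T) :
    |(h.flow p t).2 - p.2| ≤ M * T := by
  have h1 := Convex.norm_image_sub_le_of_norm_hasDerivWithin_le (s := univ)
    (fun t _ ↦ ((h.isIntegralCurve_flow p).hasDerivAt_snd t).hasDerivWithinAt)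
    (fun t _ ↦ by rw [norm_neg]; exact h.norm_le t _) convex_univ (mem_univ 0) (mem_univ t)
  rw [Real.norm_eq_abs, Real.norm_eq_abs, sub_zero, flow_zero, abs_of_nonneg ht.1] at h1
  refine h1.trans ?_
  have : 0 ≤ M := (abs_nonneg _).trans (h.norm_le 0 0)
  gcongr
  exact ht.2

theorem abs_flow_fst_sub_le (p : ℝ × ℝ) :
    |(h.flow p T).1 - p.1 - p.2 * T| ≤ M * T * T := by
  have h1 := Convex.norm_image_sub_le_of_norm_hasDerivWithin_le (s := Icc 0 T)
    (f := fun t ↦ (h.flow p t).1 - t * p.2) (f' := fun t ↦ (h.flow p t).2 - 1 * p.2)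
    (fun t _ ↦ (((h.isIntegralCurve_flow p).hasDerivAt_fst t).sub
      ((hasDerivAt_id t).mul_const p.2)).hasDerivWithinAt)
    (fun t ht ↦ by rw [one_mul]; exact h.abs_flow_snd_sub_le p ht) (convex_Icc 0 T)
    (left_mem_Icc.2 h.period_pos.le) (right_mem_Icc.2 h.period_pos.le)
  rw [Real.norm_eq_abs, Real.norm_eq_abs, sub_zero, abs_of_pos h.period_pos] at h1
  simp only [flow_zero] at h1
  convert h1 using 2
  ring

/-- The force is differentiable in space, uniformly along a curve over one period. -/
theorem exists_abs_sub_le {x : ℝ → ℝ} (hx : Continuous x) {ε : ℝ} (hε : 0 < ε) :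
    ∃ η > 0, ∀ t ∈ Icc 0 T, ∀ s, |s| ≤ η →
      |W t (x t + s) - W t (x t) - D t (x t) * s| ≤ ε * |s| := by
  have hg : Continuous fun q : ℝ × ℝ ↦ D q.1 (x q.1 + q.2) :=
    h.continuous_deriv.comp (g := Function.uncurry D)
      (f := fun q : ℝ × ℝ ↦ (q.1, x q.1 + q.2)) (by fun_prop)
  have huc := (isCompact_Icc (a := (0 : ℝ)) (b := T)).prod
    (isCompact_Icc (a := (-1 : ℝ)) (b := 1)) |>.uniformContinuousOn_of_continuous hg.continuousOn
  obtain ⟨δ, hδ, hδ'⟩ := Metric.uniformContinuousOn_iff.1 huc ε hε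
  refine ⟨min (δ / 2) 1, by positivity, fun t ht s hs ↦ ?_⟩
  have hbound : ∀ r ∈ uIcc 0 s, ‖D t (x t + r) - D t (x t)‖ ≤ ε := by
    intro r hr
    have hr' : |r| ≤ |s| := by
      simpa using abs_sub_left_of_mem_uIcc hr
    have h1 : |r| ≤ 1 := hr'.trans (hs.trans (min_le_right _ _))
    have h2 : |r| < δ := by
      have := hr'.trans (hs.trans (min_le_left _ _))
      linarith
    have := hδ' (t, r) ⟨ht, abs_le.1 h1⟩ (t, 0) ⟨ht, by norm_num⟩ (by
      rw [Prod.dist_eq]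
      simpa using h2)
    simp only [add_zero] at this
    exact (dist_eq_norm (D t (x t + r)) _ ▸ this).le
  have hd : ∀ r ∈ uIcc 0 s, HasDerivWithinAt (fun r ↦ W t (x t + r) - D t (x t) * r)
      (D t (x t + r) - D t (x t)) (uIcc 0 s) r := fun r _ ↦ by
    have h1 := (h.hasDerivAt t (x t + r)).comp_const_add (x t) r
    have h2 := (hasDerivAt_id r).const_mul (D t (x t))
    rw [mul_one] at h2
    exact (h1.sub h2).hasDerivWithinAt
  have := (convex_uIcc 0 s).norm_image_sub_le_of_norm_hasDerivWithin_le hd hbound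
    left_mem_uIcc right_mem_uIcc
  simp only [add_zero, mul_zero, sub_zero, Real.norm_eq_abs] at this
  convert this using 2
  ring

theorem lipschitzWith_linearization (x : ℝ → ℝ) (t : ℝ) :
    LipschitzWith L fun y ↦ D t (x t) * y :=
  LipschitzWith.of_dist_le_mul fun y y' ↦ by
    rw [Real.dist_eq, Real.dist_eq, ← mul_sub, abs_mul]
    gcongr
    exact h.norm_deriv_le _ _

theorem continuous_linearization {x : ℝ → ℝ} (hx : Continuous x) :
    Continuous (Function.uncurry fun t y ↦ D t (x t) * y) := by
  have : Continuous fun q : ℝ × ℝ ↦ D q.1 (x q.1) :=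
    h.continuous_deriv.comp (g := Function.uncurry D)
      (f := fun q : ℝ × ℝ ↦ (q.1, x q.1)) (by fun_prop)
  exact this.mul continuous_snd

/-- The flow is differentiable in the initial datum, the derivative being given by the
linearised equation. -/
theorem exists_norm_flow_sub_le (p : ℝ × ℝ) {ε : ℝ} (hε : 0 < ε) :
    ∃ δ > 0, ∀ q : ℝ × ℝ, ‖q‖ ≤ δ → ∀ Y : ℝ → ℝ × ℝ, Y 0 = q →
      IsIntegralCurve Y (secondOrderField fun t y ↦ D t (h.flow p t).1 * y) →
      ‖h.flow (p + q) T - h.flow p T - Y T‖ ≤ ε * ‖q‖ := by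
  set κ := Real.exp ((1 + L) * T) with hκ
  have hκ0 : 0 < κ := Real.exp_pos _
  have hz := h.isIntegralCurve_flow p
  obtain ⟨η, hη, hη'⟩ := h.exists_abs_sub_le (continuous_fst.comp hz.continuous')
    (show 0 < ε / (κ * κ) by positivity)
  refine ⟨η / κ, by positivity, fun q hq Y hY0 hY ↦ ?_⟩
  have hw := h.isIntegralCurve_flow (p + q)
  have hdist : ∀ t ∈ Icc 0 T, ‖h.flow (p + q) t - h.flow p t‖ ≤ ‖q‖ * κ := fun t ht ↦ by
    simpa [dist_eq_norm] using h.dist_flow_le (p + q) p ht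
  have hqκ : ‖q‖ * κ ≤ η := (le_div_iff₀ hκ0).1 hq
  have key := dist_le_of_approx_trajectories_ODE (a := 0) (b := T) (δ := 0) (εg := 0)
    (εf := ε / (κ * κ) * (‖q‖ * κ))
    (v := secondOrderField fun t y ↦ D t (h.flow p t).1 * y)
    (f := fun t ↦ h.flow (p + q) t - h.flow p t) (g := Y)
    (fun t ↦ lipschitzWith_secondOrderField
      (h.lipschitzWith_linearization (fun t ↦ (h.flow p t).1) t))
    (hw.continuous'.sub hz.continuous').continuousOn
    (fun t _ ↦ ((hw t).sub (hz t)).hasDerivWithinAt) (fun t ht ↦ ?_)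
    hY.continuous'.continuousOn (fun t _ ↦ (hY t).hasDerivWithinAt) (by simp) (by simp [hY0]) T
    ⟨h.period_pos.le, le_rfl⟩
  · have hK : ((1 + L : ℝ≥0) : ℝ) ≠ 0 := by positivity
    rw [dist_eq_norm, gronwallBound_of_K_ne_0 hK] at key
    refine key.trans ?_
    push_cast
    rw [sub_zero, ← hκ, zero_mul, zero_add, add_zero]
    have h1 : ε / (κ * κ) * (‖q‖ * κ) / (1 + L) ≤ ε / (κ * κ) * (‖q‖ * κ) :=
      div_le_self (by positivity) (by simp)
    have h2 : 0 ≤ ε / (κ * κ) * (‖q‖ * κ) := by positivity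
    calc ε / (κ * κ) * (‖q‖ * κ) / (1 + L) * (κ - 1)
        ≤ ε / (κ * κ) * (‖q‖ * κ) / (1 + L) * κ := by gcongr; linarith
      _ ≤ ε / (κ * κ) * (‖q‖ * κ) * κ := by gcongr
      _ = ε * ‖q‖ := by field_simp
  · have ht' := Ico_subset_Icc_self ht
    have h1 := hdist t ht'
    have h2 : |(h.flow (p + q) t).1 - (h.flow p t).1| ≤ ‖q‖ * κ := (norm_fst_le _).trans h1
    have h3 := hη' t ht' _ (h2.trans hqκ)
    simp only [Function.comp_apply, add_sub_cancel] at h3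
    have h4 : ε / (κ * κ) * |(h.flow (p + q) t).1 - (h.flow p t).1| ≤
        ε / (κ * κ) * (‖q‖ * κ) := by gcongr
    rw [dist_eq_norm, secondOrderField, secondOrderField, secondOrderField, Prod.norm_def]
    refine max_le ?_ ?_
    · simp only [Prod.fst_sub, Prod.snd_sub, sub_self, norm_zero]
      positivity
    · simp only [Prod.fst_sub, Prod.snd_sub]
      rw [Real.norm_eq_abs, ← abs_neg]
      refine le_trans (le_of_eq ?_) (h3.trans h4)
      congr 1
      ring

theorem hasInjDeriv_shooting (k : ℤ) (p : ℝ × ℝ)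
    (hinj : ∀ Y : ℝ → ℝ × ℝ,
      IsIntegralCurve Y (secondOrderField fun t y ↦ D t (h.flow p t).1 * y) →
      Y T = Y 0 → Y 0 = 0) : HasInjDeriv (h.shooting k) p := by
  have hx : Continuous fun t ↦ (h.flow p t).1 :=
    continuous_fst.comp (h.isIntegralCurve_flow p).continuous'
  have hex := fun q ↦ exists_isIntegralCurve
    (fun t ↦ lipschitzWith_secondOrderField
      (h.lipschitzWith_linearization (fun t ↦ (h.flow p t).1) t))
    (continuous_uncurry_secondOrderField (h.continuous_linearization hx)) q
  obtain ⟨Y, hY0, hY⟩ := hex (1, 0)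
  obtain ⟨Z, hZ0, hZ⟩ := hex (0, 1)
  have hlin : ∀ s t : ℝ, IsIntegralCurve (fun τ ↦ s • Y τ + t • Z τ)
      (secondOrderField fun t y ↦ D t (h.flow p t).1 * y) := fun s t τ ↦ by
    have := ((hY τ).const_smul s).add ((hZ τ).const_smul t)
    convert! this using 1
    simp only [secondOrderField, Prod.smul_mk, Prod.mk_add_mk, Prod.snd_add, Prod.smul_snd,
      Prod.fst_add, Prod.smul_fst, smul_eq_mul, Prod.mk.injEq, true_and]
    ring
  have hlin0 : ∀ s t : ℝ, s • Y 0 + t • Z 0 = (s, t) := fun s t ↦ by simp [hY0, hZ0]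
  refine ⟨⟨(Y T).1 - 1, (Y T).2⟩, ⟨(Z T).1, (Z T).2 - 1⟩, fun s t hst ↦ ?_, fun ε hε ↦ ?_⟩
  · have := hinj _ (hlin s t) (by
      rw [hlin0]
      rw [Complex.ext_iff] at hst
      simp only [Complex.add_re, Complex.re_ofReal_mul, Complex.zero_re, Complex.add_im,
        Complex.im_ofReal_mul, Complex.zero_im] at hst
      refine Prod.ext ?_ ?_ <;>
      simp only [Prod.fst_add, Prod.smul_fst, smul_eq_mul, Prod.snd_add, Prod.smul_snd] <;>
      linarith)
    rw [hlin0] at this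
    simpa using this
  · obtain ⟨δ, hδ, hδ'⟩ := h.exists_norm_flow_sub_le p (half_pos hε)
    refine ⟨δ, hδ, fun q hq ↦ ?_⟩
    have h1 := hδ' q hq _ (hlin0 q.1 q.2) (hlin q.1 q.2)
    refine (Complex.norm_le_abs_re_add_abs_im _).trans ?_
    have h2 := (norm_fst_le _).trans h1
    have h3 := (norm_snd_le _).trans h1
    rw [Real.norm_eq_abs] at h2 h3
    have e1 : (h.shooting k (p + q) - h.shooting k p - (q.1 * (⟨(Y T).1 - 1, (Y T).2⟩ : ℂ) +
        q.2 * (⟨(Z T).1, (Z T).2 - 1⟩ : ℂ))).re =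
        (h.flow (p + q) T - h.flow p T - (q.1 • Y T + q.2 • Z T)).1 := by
      simp only [shooting, Complex.sub_re, Complex.add_re, Complex.re_ofReal_mul, Prod.fst_sub,
        Prod.fst_add, Prod.smul_fst, smul_eq_mul]
      ring
    have e2 : (h.shooting k (p + q) - h.shooting k p - (q.1 * (⟨(Y T).1 - 1, (Y T).2⟩ : ℂ) +
        q.2 * (⟨(Z T).1, (Z T).2 - 1⟩ : ℂ))).im =
        (h.flow (p + q) T - h.flow p T - (q.1 • Y T + q.2 • Z T)).2 := by
      simp only [shooting, Complex.sub_im, Complex.add_im, Complex.im_ofReal_mul, Prod.snd_sub,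
        Prod.snd_add, Prod.smul_snd, smul_eq_mul]
      ring
    rw [e1, e2]
    linarith

end IsPeriodicForce

section DiscreteAction

/-- The time-discretised action of the closed polygon `i ↦ η i + c i`. -/
noncomputable def discreteAction (U : ℝ → ℝ → ℝ) (n : ℕ) [NeZero n] (τ c : ℝ) (η : ZMod n → ℝ) :
    ℝ :=
  ∑ i, ((η (i + 1) - η i + c) ^ 2 / (2 * τ) - τ * U (τ * i.val) (η i + c * i.val))

variable {U W : ℝ → ℝ → ℝ} {B : ℝ} {n : ℕ} [NeZero n] {τ c : ℝ}

theorem discreteAction_add_int (hU1 : ∀ t x, U t (x + 1) = U t x) (η : ZMod n → ℝ) (m : ℤ) :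
    discreteAction U n τ c (fun i ↦ η i + m) = discreteAction U n τ c η := by
  have hp : ∀ t x, U t (x + m) = U t x := fun t x ↦ by
    have : Function.Periodic (U t) 1 := hU1 t
    simpa using this.int_mul m x
  refine Finset.sum_congr rfl fun i _ ↦ ?_
  rw [add_sub_add_right_eq_sub, add_right_comm (η i), hp]

theorem continuous_discreteAction (hUW : ∀ t x, HasDerivAt (U t) (W t x) x) :
    Continuous (discreteAction U n τ c) := by
  have hc : ∀ t, Continuous (U t) := fun t ↦
    continuous_iff_continuousAt.2 fun x ↦ (hUW t x).continuousAt
  refine continuous_finsetSum _ fun i _ ↦ Continuous.sub (by fun_prop) (continuous_const.mul ?_)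
  exact (hc _).comp (by fun_prop)

theorem exists_discreteAction_min (hUW : ∀ t x, HasDerivAt (U t) (W t x) x)
    (hU1 : ∀ t x, U t (x + 1) = U t x) (hUB : ∀ t x, |U t x| ≤ B) (hτ : 0 < τ) :
    ∃ η : ZMod n → ℝ, η 0 ∈ Icc (0 : ℝ) 1 ∧
      ∀ η', discreteAction U n τ c η ≤ discreteAction U n τ c η' := by
  set G := discreteAction U n τ c with hG
  have hGc : Continuous G := continuous_discreteAction hUW
  obtain ⟨C, hC0, hC⟩ : ∃ C ≥ 0, ∀ η, G η ≤ G 0 → ∀ i, |η (i + 1) - η i| ≤ C := by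
    refine ⟨Real.sqrt (2 * τ * (G 0 + n * (τ * B))) + |c|, by positivity, fun η hη i ↦ ?_⟩
    have h1 : ∀ j : ZMod n, (η (j + 1) - η j + c) ^ 2 / (2 * τ) - τ * B ≤
        (η (j + 1) - η j + c) ^ 2 / (2 * τ) - τ * U (τ * j.val) (η j + c * j.val) := fun j ↦ by
      have := (le_abs_self _).trans (hUB (τ * j.val) (η j + c * j.val))
      gcongr
    have h2 := (Finset.sum_le_sum fun j (_ : j ∈ Finset.univ) ↦ h1 j).trans hη
    rw [Finset.sum_sub_distrib, Finset.sum_const, Finset.card_univ, ZMod.card,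
      nsmul_eq_mul] at h2
    have h3 := Finset.single_le_sum (f := fun j : ZMod n ↦ (η (j + 1) - η j + c) ^ 2 / (2 * τ))
      (fun j _ ↦ by positivity) (Finset.mem_univ i)
    have h4 : (η (i + 1) - η i + c) ^ 2 / (2 * τ) ≤ G 0 + n * (τ * B) := by linarith
    rw [div_le_iff₀ (by positivity), mul_comm] at h4
    have h5 := Real.abs_le_sqrt h4
    have h6 := abs_sub_abs_le_abs_sub (η (i + 1) - η i) (-c)
    rw [sub_neg_eq_add, abs_neg] at h6
    linarith
  set S : Set (ZMod n → ℝ) := {η | η 0 ∈ Icc (0 : ℝ) 1 ∧ G η ≤ G 0} with hS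
  have hSc : IsCompact S := by
    refine Metric.isCompact_of_isClosed_isBounded ?_ ?_
    · exact (isClosed_Icc.preimage (continuous_apply 0)).inter (isClosed_le hGc continuous_const)
    · refine (Metric.isBounded_closedBall (x := (0 : ZMod n → ℝ)) (r := 1 + n * C)).subset
        fun η hη ↦ ?_
      have hind : ∀ i : ℕ, |η (i : ZMod n)| ≤ 1 + i * C := by
        intro i
        induction i with
        | zero =>
          have := hη.1
          simp only [Nat.cast_zero, zero_mul, add_zero]
          exact abs_le.2 ⟨by linarith [this.1], this.2⟩
        | succ i ih =>
          have h1 := hC η hη.2 i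
          have h2 := abs_sub_abs_le_abs_sub (η ((i : ZMod n) + 1)) (η i)
          push_cast
          linarith
      rw [mem_closedBall_zero_iff, pi_norm_le_iff_of_nonneg (by positivity)]
      intro i
      have h1 := hind i.val
      rw [ZMod.natCast_zmod_val] at h1
      refine h1.trans ?_
      have : (i.val : ℝ) ≤ n := by exact_mod_cast (ZMod.val_lt i).le
      gcongr
  obtain ⟨η, hη, hmin⟩ := hSc.exists_isMinOn ⟨0, by simp [hS]⟩ hGc.continuousOn
  refine ⟨η, hη.1, fun η' ↦ ?_⟩
  rcases le_total (G η') (G 0) with h | h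
  · have hshift : G (fun i ↦ η' i + (-⌊η' 0⌋ : ℤ)) = G η' := discreteAction_add_int hU1 _ _
    rw [← hshift]
    refine hmin ⟨⟨?_, ?_⟩, hshift.trans_le h⟩
    · push_cast
      linarith [Int.floor_le (η' 0)]
    · push_cast
      linarith [Int.lt_floor_add_one (η' 0)]
  · exact hη.2.trans h

theorem discreteAction_euler_lagrange (hUW : ∀ t x, HasDerivAt (U t) (W t x) x) (hτ : 0 < τ)
    {η : ZMod n → ℝ} (hη : ∀ η', discreteAction U n τ c η ≤ discreteAction U n τ c η')
    (i : ZMod n) :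
    (η (i + 1) - η i + c) / τ = (η i - η (i - 1) + c) / τ - τ * W (τ * i.val) (η i + c * i.val) := by
  set φ : ZMod n → ℝ := Pi.single i 1 with hφ
  have hd : HasDerivAt (fun s : ℝ ↦ discreteAction U n τ c (fun j ↦ η j + s * φ j))
      (∑ j, ((η (j + 1) - η j + c) / τ * (φ (j + 1) - φ j) -
        τ * W (τ * j.val) (η j + c * j.val) * φ j)) 0 := by
    refine HasDerivAt.fun_sum fun j _ ↦ HasDerivAt.sub ?_ ?_
    · have hl : ∀ k, HasDerivAt (fun s : ℝ ↦ η k + s * φ k) (φ k) 0 := fun k ↦ by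
        simpa using ((hasDerivAt_id (0 : ℝ)).mul_const (φ k)).const_add (η k)
      have := ((((hl (j + 1)).sub (hl j)).add_const c).pow 2).div_const (2 * τ)
      refine HasDerivAt.congr_deriv this ?_
      change ((2 : ℕ) : ℝ) * (η (j + 1) + 0 * φ (j + 1) - (η j + 0 * φ j) + c) ^ 1 *
        (φ (j + 1) - φ j) / (2 * τ) = _
      push_cast
      field_simp
      ring
    · have hl : HasDerivAt (fun s : ℝ ↦ η j + s * φ j + c * j.val) (φ j) 0 := by
        simpa using (((hasDerivAt_id (0 : ℝ)).mul_const (φ j)).const_add (η j)).add_const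
          (c * j.val)
      have h1 : HasDerivAt (U (τ * j.val)) (W (τ * j.val) (η j + c * j.val))
          (η j + 0 * φ j + c * j.val) := by
        simpa using hUW (τ * j.val) (η j + c * j.val)
      have := (h1.comp 0 hl).const_mul τ
      rw [← mul_assoc] at this
      exact this
  have h0 := IsLocalMin.hasDerivAt_eq_zero (a := 0) (Eventually.of_forall fun s ↦ by
    simpa using hη fun j ↦ η j + s * φ j) hd
  have h1 : ∑ j, (η (j + 1) - η j + c) / τ * φ (j + 1) =
      ∑ j, (η j - η (j - 1) + c) / τ * φ j := by
    rw [← Equiv.sum_comp (Equiv.addRight (1 : ZMod n))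
      fun j ↦ (η j - η (j - 1) + c) / τ * φ j]
    simp
  simp only [mul_sub, Finset.sum_sub_distrib, h1] at h0
  simp only [hφ, Pi.single_apply, mul_ite, mul_one, mul_zero, Finset.sum_ite_eq',
    Finset.mem_univ, if_true] at h0
  linarith

end DiscreteAction

/-- Closed polygons winding `k` times and solving the discretised equation exist for all step
sizes. -/
theorem exists_discrete_solution {U W : ℝ → ℝ → ℝ} {B T : ℝ}
    (hUW : ∀ t x, HasDerivAt (U t) (W t x) x)
    (hU1 : ∀ t x, U t (x + 1) = U t x) (hUB : ∀ t x, |U t x| ≤ B) (hT : 0 < T) (k : ℤ)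
    {n : ℕ} (hn : 0 < n) :
    ∃ x u : ℕ → ℝ, x 0 ∈ Icc (0 : ℝ) 1 ∧ x n = x 0 + k ∧ u n = u 0 ∧
      (∀ i < n, u (i + 1) = u i - T / n * W (T / n * i) (x i)) ∧
      ∀ i < n, x (i + 1) = x i + T / n * u (i + 1) := by
  have : NeZero n := ⟨hn.ne'⟩
  have hn0 : (0 : ℝ) < n := by exact_mod_cast hn
  have hτ : 0 < T / n := by positivity
  obtain ⟨η, hη0, hη⟩ := exists_discreteAction_min (n := n) (c := k / n) hUW hU1 hUB hτ
  have hEL := discreteAction_euler_lagrange hUW hτ hη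
  refine ⟨fun i ↦ η i + k / n * i, fun i ↦ (η i - η (i - 1) + k / n) / (T / n),
    by simpa using hη0, ?_, by simp, fun i hi ↦ ?_, fun i _ ↦ ?_⟩
  · simp only [CharP.cast_eq_zero, Nat.cast_zero, mul_zero, add_zero, add_right_inj]
    field_simp
  · have := hEL i
    rw [ZMod.val_natCast_of_lt hi] at this
    simpa using this
  · simp only [Nat.cast_add, Nat.cast_one, add_sub_cancel_right]
    field_simp
    ring

/-- A discrete Grönwall inequality over finitely many steps. -/
theorem le_mul_exp_of_discrete_step {e : ℕ → ℝ} {n : ℕ} {a b : ℝ} (ha : 0 ≤ a) (hb : 0 ≤ b)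
    (he : 0 ≤ e 0) (h : ∀ i < n, e (i + 1) ≤ (1 + a) * e i + b) :
    ∀ i ≤ n, e i ≤ (e 0 + i * b) * Real.exp (a * i) := by
  intro i
  induction i with
  | zero => simp
  | succ i ih =>
    intro hi
    have h1 := h i hi
    have h2 := ih (by omega)
    have h3 : 1 + a ≤ Real.exp a := by linarith [Real.add_one_le_exp a]
    have h4 : 1 ≤ Real.exp (a * (i + 1 : ℕ)) := Real.one_le_exp (by positivity)
    calc e (i + 1) ≤ (1 + a) * e i + b := h1
      _ ≤ (1 + a) * ((e 0 + i * b) * Real.exp (a * i)) + b := by gcongr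
      _ ≤ Real.exp a * ((e 0 + i * b) * Real.exp (a * i)) + b * Real.exp (a * (i + 1 : ℕ)) := by
        gcongr
        exact le_mul_of_one_le_right hb h4
      _ = (e 0 + (i + 1 : ℕ) * b) * Real.exp (a * (i + 1 : ℕ)) := by
        push_cast
        rw [mul_add, Real.exp_add]
        ring_nf

namespace IsPeriodicForce

variable {W D : ℝ → ℝ → ℝ} {T M : ℝ} {L : ℝ≥0} (h : IsPeriodicForce W D T M L)
include h

/-- Consistency of the Euler scheme along a solution. -/
theorem exists_norm_euler_sub_le (p : ℝ × ℝ) {ε : ℝ} (hε : 0 < ε) :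
    ∃ δ > 0, ∀ s t, 0 ≤ s → s ≤ t → t ≤ T → t - s < δ →
      ‖h.flow p t - h.flow p s - (t - s) • secondOrderField W s (h.flow p s)‖ ≤ ε * (t - s) := by
  have hz := h.isIntegralCurve_flow p
  have hg : Continuous fun t ↦ secondOrderField W t (h.flow p t) :=
    (continuous_uncurry_secondOrderField h.continuous).comp (continuous_id.prodMk hz.continuous')
  obtain ⟨δ, hδ, hδ'⟩ := Metric.uniformContinuousOn_iff.1
    ((isCompact_Icc (a := 0) (b := T)).uniformContinuousOn_of_continuous hg.continuousOn) ε hε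
  refine ⟨δ, hδ, fun s t hs hst ht hδst ↦ ?_⟩
  have := Convex.norm_image_sub_le_of_norm_hasDerivWithin_le (s := Icc s t)
    (f := fun σ ↦ h.flow p σ - σ • secondOrderField W s (h.flow p s))
    (fun σ _ ↦ ((hz σ).sub ((hasDerivAt_id σ).smul_const _)).hasDerivWithinAt)
    (C := ε) (fun σ hσ ↦ ?_) (convex_Icc s t) (left_mem_Icc.2 hst) (right_mem_Icc.2 hst)
  · rw [Real.norm_of_nonneg (sub_nonneg.2 hst)] at this
    refine le_of_eq_of_le (congrArg norm ?_) this
    rw [sub_smul]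
    abel
  · rw [one_smul, ← dist_eq_norm]
    refine (hδ' σ ⟨hs.trans hσ.1, hσ.2.trans ht⟩ s ⟨hs, hst.trans ht⟩ ?_).le
    rw [Real.dist_eq, abs_of_nonneg (sub_nonneg.2 hσ.1)]
    linarith [hσ.2]

/-- Convergence of the semi-implicit Euler scheme. -/
theorem norm_euler_sub_flow_le (p : ℝ × ℝ) {ε : ℝ} (hε : 0 < ε) :
    ∃ N : ℕ, ∀ n > N, ∀ x u : ℕ → ℝ,
      (∀ i < n, u (i + 1) = u i - T / n * W (T / n * i) (x i)) →
      (∀ i < n, x (i + 1) = x i + T / n * u (i + 1)) →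
      ‖(x n, u n) - h.flow p T‖ ≤
        (‖(x 0, u 0) - p‖ + T * (ε + T / n * M)) * Real.exp ((1 + L) * T) := by
  obtain ⟨δ, hδ, hδ'⟩ := h.exists_norm_euler_sub_le p hε
  obtain ⟨N, hN⟩ := exists_nat_gt (T / δ)
  refine ⟨N, fun n hn x u hu hx ↦ ?_⟩
  have hT := h.period_pos
  have hn0 : (0 : ℝ) < n := by exact_mod_cast (Nat.zero_le N).trans_lt hn
  set τ := T / n with hτdef
  have hτ : 0 < τ := by positivity
  have hτn : τ * n = T := by rw [hτdef]; field_simp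
  have hτδ : τ < δ := by
    rw [hτdef, div_lt_comm₀ hn0 hδ]
    exact hN.trans (by exact_mod_cast hn)
  have hM : 0 ≤ M := (abs_nonneg _).trans (h.norm_le 0 0)
  have hstep : ∀ i < n, ‖(x (i + 1), u (i + 1)) - h.flow p (τ * (i + 1 : ℕ))‖ ≤
      (1 + τ * (1 + L)) * ‖(x i, u i) - h.flow p (τ * i)‖ + τ * (ε + τ * M) := by
    intro i hi
    have hi' : ((i : ℝ) + 1) ≤ n := by exact_mod_cast hi
    have h1 := hδ' (τ * i) (τ * (i + 1 : ℕ)) (by positivity) (by push_cast; linarith)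
      (by push_cast; rw [← hτn]; gcongr) (by push_cast; linarith)
    rw [show τ * (i + 1 : ℕ) - τ * i = τ by push_cast; ring] at h1
    have h2 := (lipschitzWith_secondOrderField (h.lipschitzWith (τ * i))).norm_sub_le
      (x i, u i) (h.flow p (τ * i))
    push_cast at h2
    have h3 : ‖((τ * (u (i + 1) - u i), 0) : ℝ × ℝ)‖ ≤ τ * (τ * M) := by
      rw [Prod.norm_mk, norm_zero, max_eq_left (norm_nonneg _), norm_mul,
        Real.norm_of_nonneg hτ.le, hu i hi, sub_sub_cancel_left, norm_neg, norm_mul,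
        Real.norm_of_nonneg hτ.le]
      gcongr
      exact h.norm_le _ _
    have h4 : (x (i + 1), u (i + 1)) - h.flow p (τ * (i + 1 : ℕ)) =
        ((x i, u i) - h.flow p (τ * i)) +
        τ • (secondOrderField W (τ * i) (x i, u i) -
          secondOrderField W (τ * i) (h.flow p (τ * i))) +
        (τ * (u (i + 1) - u i), 0) -
        (h.flow p (τ * (i + 1 : ℕ)) - h.flow p (τ * i) -
          τ • secondOrderField W (τ * i) (h.flow p (τ * i))) := by
      have h5 : (x (i + 1), u (i + 1)) = (x i, u i) +
          τ • secondOrderField W (τ * i) (x i, u i) + (τ * (u (i + 1) - u i), 0) := by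
        refine Prod.ext ?_ ?_
        · simp only [secondOrderField, Prod.fst_add, Prod.smul_fst, smul_eq_mul]
          rw [hx i hi]
          ring
        · simp only [secondOrderField, Prod.snd_add, Prod.smul_snd, smul_eq_mul, add_zero]
          rw [hu i hi]
          ring
      rw [h5, smul_sub]
      abel
    rw [h4]
    refine (norm_sub_le _ _).trans ?_
    have h6 := norm_add₃_le (a := (x i, u i) - h.flow p (τ * i))
      (b := τ • (secondOrderField W (τ * i) (x i, u i) -
          secondOrderField W (τ * i) (h.flow p (τ * i))))
      (c := (τ * (u (i + 1) - u i), 0))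
    rw [norm_smul, Real.norm_of_nonneg hτ.le] at h6
    have h7 := mul_le_mul_of_nonneg_left h2 hτ.le
    linarith
  have := le_mul_exp_of_discrete_step (e := fun i ↦ ‖(x i, u i) - h.flow p (τ * i)‖)
    (by positivity) (by positivity) (norm_nonneg _) hstep n le_rfl
  simp only [Nat.cast_zero, mul_zero, flow_zero, hτn] at this
  convert this using 2
  · rw [← mul_assoc, mul_comm (n : ℝ), hτn]
  · rw [mul_right_comm, hτn, mul_comm]

theorem exists_shooting_eq_zero {U : ℝ → ℝ → ℝ} {B : ℝ}
    (hUW : ∀ t x, HasDerivAt (U t) (W t x) x)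
    (hU1 : ∀ t x, U t (x + 1) = U t x) (hUB : ∀ t x, |U t x| ≤ B) (k : ℤ) :
    ∃ p, h.shooting k p = 0 := by
  have hT := h.period_pos
  have hM : 0 ≤ M := (abs_nonneg _).trans (h.norm_le 0 0)
  choose x u hx0 hxn hun hu hx using fun n : ℕ ↦
    exists_discrete_solution hUW hU1 hUB hT k n.succ_pos
  have hbound : ∀ n, |u n 0| ≤ |(k : ℝ)| / T + T * M := by
    intro n
    set m := n + 1 with hm
    have hm0 : (0 : ℝ) < m := by positivity
    have hτ : 0 < T / m := by positivity
    have h1 : ∀ i ≤ m, |u n i - u n 0| ≤ i * (T / m * M) := by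
      intro i
      induction i with
      | zero => simp
      | succ i ih =>
        intro hi
        have h2 := ih (by omega)
        have h3 : |T / m * W (T / m * i) (x n i)| ≤ T / m * M := by
          rw [abs_mul, abs_of_pos hτ]
          gcongr
          exact h.norm_le _ _
        rw [hu n i hi, show u n i - T / m * W (T / m * i) (x n i) - u n 0 =
          (u n i - u n 0) - T / m * W (T / m * i) (x n i) by ring]
        refine (abs_sub _ _).trans ?_
        push_cast
        linarith
    have h2 : ∀ i ≤ m, |u n i - u n 0| ≤ T * M := fun i hi ↦ by
      refine (h1 i hi).trans ?_
      have : (i : ℝ) ≤ m := by exact_mod_cast hi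
      calc (i : ℝ) * (T / m * M) ≤ m * (T / m * M) := by gcongr
        _ = T * M := by field_simp
    have h3 : ∀ i ≤ m, |x n i - x n 0 - i * (T / m * u n 0)| ≤ i * (T / m * (T * M)) := by
      intro i
      induction i with
      | zero => simp
      | succ i ih =>
        intro hi
        have h4 := ih (by omega)
        have h5 : |T / m * (u n (i + 1) - u n 0)| ≤ T / m * (T * M) := by
          rw [abs_mul, abs_of_pos hτ]
          gcongr
          exact h2 _ hi
        rw [hx n i hi, show x n i + T / m * u n (i + 1) - x n 0 - (i + 1 : ℕ) * (T / m * u n 0) =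
          (x n i - x n 0 - i * (T / m * u n 0)) + T / m * (u n (i + 1) - u n 0) by
            push_cast; ring]
        refine (abs_add_le _ _).trans ?_
        push_cast
        linarith
    have h4 := h3 m le_rfl
    rw [hxn, add_sub_cancel_left, show (m : ℝ) * (T / m * u n 0) = T * u n 0 by field_simp,
      show (m : ℝ) * (T / m * (T * M)) = T * (T * M) by field_simp, abs_sub_comm] at h4
    have h5 := abs_sub_abs_le_abs_sub (T * u n 0) k
    rw [abs_mul, abs_of_pos hT] at h5
    have h6 : T * |u n 0| ≤ T * (|(k : ℝ)| / T + T * M) := by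
      rw [mul_add, mul_div_cancel₀ _ hT.ne']
      linarith
    exact le_of_mul_le_mul_left h6 hT
  obtain ⟨p, -, φ, hφ, hlim⟩ := (isCompact_Icc (a := (0 : ℝ)) (b := 1)).prod
    (isCompact_Icc (a := -(|(k : ℝ)| / T + T * M)) (b := |(k : ℝ)| / T + T * M))
    |>.tendsto_subseq (x := fun n ↦ (x n 0, u n 0)) fun n ↦ ⟨hx0 n, abs_le.1 (hbound n)⟩
  refine ⟨p, h.shooting_eq_zero_iff.2 ?_⟩
  have hφ' : Tendsto (fun n ↦ ((φ n + 1 : ℕ) : ℝ)) atTop atTop :=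
    tendsto_natCast_atTop_atTop.comp ((tendsto_add_atTop_nat 1).comp hφ.tendsto_atTop)
  have hle : ∀ ε > 0, ‖p + ((k : ℝ), 0) - h.flow p T‖ ≤ T * ε * Real.exp ((1 + L) * T) := by
    intro ε hε
    obtain ⟨N, hN⟩ := h.norm_euler_sub_flow_le p hε
    have h1 : Tendsto (fun n ↦ ‖(x (φ n) 0, u (φ n) 0) + ((k : ℝ), 0) - h.flow p T‖) atTop
        (𝓝 ‖p + ((k : ℝ), 0) - h.flow p T‖) := ((hlim.add_const _).sub_const _).norm
    have h2 : Tendsto (fun n ↦ (‖(x (φ n) 0, u (φ n) 0) - p‖ +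
        T * (ε + T / (φ n + 1 : ℕ) * M)) * Real.exp ((1 + L) * T)) atTop
        (𝓝 ((‖p - p‖ + T * (ε + 0 * M)) * Real.exp ((1 + L) * T))) :=
      ((hlim.sub_const p).norm.add (((hφ'.const_div_atTop T).mul_const M).const_add ε
        |>.const_mul T)).mul_const _
    rw [sub_self, norm_zero, zero_mul, zero_add, add_zero] at h2
    refine le_of_tendsto_of_tendsto h1 h2 ?_
    filter_upwards [hφ.tendsto_atTop.eventually_ge_atTop N] with n hn
    have := hN (φ n + 1) (by omega) (x (φ n)) (u (φ n)) (hu _) (hx _)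
    rw [hxn, hun] at this
    simpa using this
  have h0 : ‖p + ((k : ℝ), 0) - h.flow p T‖ ≤ 0 := by
    refine le_of_forall_pos_le_add fun ε hε ↦ ?_
    have hc : 0 < T * Real.exp ((1 + L) * T) := by positivity
    refine (hle (ε / (T * Real.exp ((1 + L) * T))) (by positivity)).trans (le_of_eq ?_)
    field_simp
    ring
  exact (sub_eq_zero.1 (norm_le_zero_iff.1 h0)).symm

end IsPeriodicForce

section Potential

theorem ContDiff.hasDerivAt_uncurry_snd {F : ℝ → ℝ → ℝ} {n : WithTop ℕ∞}
    (hF : ContDiff ℝ n (Function.uncurry F)) (hn : n ≠ 0) (t x : ℝ) :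
    HasDerivAt (F t) (deriv (F t) x) x := by
  have h : DifferentiableAt ℝ (F t) x :=
    ((hF.differentiable hn).comp ((differentiable_const t).prodMk differentiable_id)) x
  exact h.hasDerivAt

theorem ContDiff.uncurry_deriv_snd {F : ℝ → ℝ → ℝ} {n m : WithTop ℕ∞}
    (hF : ContDiff ℝ n (Function.uncurry F)) (hmn : m + 1 ≤ n) :
    ContDiff ℝ m (Function.uncurry fun t ↦ deriv (F t)) := by
  have h : (Function.uncurry fun t ↦ deriv (F t)) =
      fun p ↦ fderiv ℝ (Function.uncurry F) p (0, 1) := by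
    ext ⟨t, x⟩
    have hn : n ≠ 0 := by
      rintro rfl
      simp at hmn
    exact (((hF.differentiable hn (t, x)).hasFDerivAt.comp_hasDerivAt x
      ((hasDerivAt_const x t).prodMk (hasDerivAt_id x)))).deriv
  rw [h]
  exact (hF.fderiv_right hmn).clm_apply contDiff_const

theorem exists_abs_le_of_periodic {F : ℝ → ℝ → ℝ} (hF : Continuous (Function.uncurry F)) {T : ℝ}
    (hT : 0 < T) (hx : ∀ t x, F t (x + 1) = F t x) (ht : ∀ t x, F (t + T) x = F t x) :
    ∃ B : ℝ≥0, ∀ t x, |F t x| ≤ B := by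
  obtain ⟨C, hC⟩ := (isCompact_Icc (a := (0 : ℝ)) (b := T)).prod
    (isCompact_Icc (a := (0 : ℝ)) (b := 1)) |>.exists_bound_of_continuousOn hF.continuousOn
  refine ⟨C.toNNReal, fun t x ↦ ?_⟩
  obtain ⟨s, hs, hts⟩ := Function.Periodic.exists_mem_Ico₀ (f := F) (c := T)
    (fun t ↦ funext (ht t)) hT t
  obtain ⟨y, hy, hxy⟩ := Function.Periodic.exists_mem_Ico₀ (f := F s) (c := 1) (hx s) one_pos x
  rw [hts, hxy]
  exact (hC (s, y) ⟨Ico_subset_Icc_self hs, Ico_subset_Icc_self hy⟩).trans (Real.le_coe_toNNReal C)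

theorem deriv_add_of_periodic {f : ℝ → ℝ} {c : ℝ} (hf : ∀ x, f (x + c) = f x) (x : ℝ) :
    deriv f (x + c) = deriv f x := by
  rw [← deriv_comp_add_const, funext hf]

/-- The force derived from a `C²` doubly periodic potential. -/
theorem exists_isPeriodicForce {V : ℝ → ℝ → ℝ} {T : ℝ} (hT : 0 < T)
    (hV : ContDiff ℝ 2 (Function.uncurry V)) (hVx : ∀ t y, V t (y + 1) = V t y)
    (hVt : ∀ t y, V (t + T) y = V t y) :
    ∃ (M : ℝ) (L : ℝ≥0),
      IsPeriodicForce (fun t ↦ deriv (V t)) (fun t ↦ deriv (deriv (V t))) T M L := by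
  have hW : ContDiff ℝ 1 (Function.uncurry fun t ↦ deriv (V t)) :=
    hV.uncurry_deriv_snd (by norm_num [one_add_one_eq_two])
  have hD : ContDiff ℝ 0 (Function.uncurry fun t ↦ deriv (deriv (V t))) :=
    hW.uncurry_deriv_snd (by norm_num)
  have hVt' (t : ℝ) : V (t + T) = V t := funext (hVt t)
  have hWx (t x : ℝ) := deriv_add_of_periodic (hVx t) x
  obtain ⟨M, hM⟩ := exists_abs_le_of_periodic hW.continuous hT hWx
    fun t x ↦ by rw [hVt']
  obtain ⟨L, hL⟩ := exists_abs_le_of_periodic hD.continuous hT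
    (fun t ↦ deriv_add_of_periodic (hWx t)) fun t x ↦ by rw [hVt']
  exact ⟨M, L, hT, hW.continuous, hD.continuous, hW.hasDerivAt_uncurry_snd one_ne_zero, hM, hL,
    hWx, fun t x ↦ by rw [hVt']⟩

end Potential

namespace IsPeriodicForce

variable {W D : ℝ → ℝ → ℝ} {T M : ℝ} {L : ℝ≥0} (h : IsPeriodicForce W D T M L)
include h

theorem norm_bound_nonneg : 0 ≤ M := (abs_nonneg _).trans (h.norm_le 0 0)

theorem abs_shooting_re_sub_le (k : ℤ) (p : ℝ × ℝ) :
    |(h.shooting k p).re - (p.2 * T - k)| ≤ M * T * T := by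
  refine le_of_eq_of_le (congrArg abs ?_) (h.abs_flow_fst_sub_le p)
  simp only [shooting]
  ring

/-- The zeros of the shooting maps are nondegenerate when the linearized equation
has no nonzero periodic solutions. -/
theorem hasInjDeriv_shooting_of_nonresonant {k : ℤ}
    (hnon : ∀ x : ℝ → ℝ, ContDiff ℝ 2 x → (∀ t, deriv (deriv x) t + W t (x t) = 0) →
      (∀ t, x (t + T) = x t + k) → ∀ y : ℝ → ℝ, ContDiff ℝ 2 y →
      (∀ t, deriv (deriv y) t + D t (x t) * y t = 0) → (∀ t, y (t + T) = y t) → y = 0)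
    {p : ℝ × ℝ} (hp : h.shooting k p = 0) : HasInjDeriv (h.shooting k) p := by
  refine h.hasInjDeriv_shooting k p fun Y hY hYT ↦ ?_
  have hz := h.isIntegralCurve_flow p
  have hx : Continuous fun t ↦ (h.flow p t).1 := continuous_fst.comp hz.continuous'
  have hper (t : ℝ) : (h.flow p (t + T)).1 = (h.flow p t).1 + k := by
    rw [h.flow_add_period_of_shooting hp]
    rfl
  have hYper : (fun t ↦ Y (t + T)) = Y :=
    IsIntegralCurve.eq_of_eq_at (t := 0) (h.lipschitzWith_linearization fun t ↦ (h.flow p t).1)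
      (hY.comp_add_period fun t y ↦ by rw [hper, h.deriv_add_int, h.deriv_add_period])
      hY (by rw [zero_add, hYT])
  have hY0 := hnon _ (hz.contDiff_two_fst h.continuous)
    (fun t ↦ by rw [hz.deriv_deriv_fst, neg_add_cancel]) hper _
    (hY.contDiff_two_fst (h.continuous_linearization hx))
    (fun t ↦ by rw [hY.deriv_deriv_fst, neg_add_cancel]) fun t ↦ by rw [← congrFun hYper t]
  have hY1 : (fun t ↦ (Y t).2) = 0 := by
    rw [← hY.deriv_fst, hY0]
    simp
  exact Prod.ext (congrFun hY0 0) (congrFun hY1 0)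

/-- A fundamental domain for the integer shifts which contains an even number of zeros of a
nondegenerate shooting map, and no zeros on its boundary. -/
theorem exists_box_even_ncard {k : ℤ}
    (hd : ∀ p, h.shooting k p = 0 → HasInjDeriv (h.shooting k) p) :
    ∃ a c d : ℝ, (∀ y, h.shooting k (a, y) ≠ 0) ∧ (∀ p, h.shooting k p = 0 → p.2 ∈ Ioo c d) ∧
      (boxZeros (h.shooting k) a (a + 1) c d).Finite ∧
      Even (boxZeros (h.shooting k) a (a + 1) c d).ncard := by
  have hT := h.period_pos
  have hf := h.continuous_shooting k
  have hM := h.norm_bound_nonneg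
  obtain ⟨R, hR⟩ := exists_gt ((|(k : ℝ)| + M * T * T) / T)
  have hR0 : 0 < R := lt_of_le_of_lt (by positivity) hR
  rw [div_lt_iff₀ hT] at hR
  have hpos (p : ℝ × ℝ) (hp : R ≤ p.2) : 0 < (h.shooting k p).re := by
    have h1 := (abs_le.1 (h.abs_shooting_re_sub_le k p)).1
    have h2 : R * T ≤ p.2 * T := by gcongr
    linarith [le_abs_self (k : ℝ)]
  have hneg (p : ℝ × ℝ) (hp : p.2 ≤ -R) : (h.shooting k p).re < 0 := by
    have h1 := (abs_le.1 (h.abs_shooting_re_sub_le k p)).2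
    have h2 : p.2 * T ≤ -R * T := by gcongr
    linarith [neg_abs_le (k : ℝ)]
  have hzero (p : ℝ × ℝ) (hp : h.shooting k p = 0) : p.2 ∈ Ioo (-R) R := by
    constructor <;> by_contra! hc
    · simpa [hp] using hneg p hc
    · simpa [hp] using hpos p hc
  obtain ⟨a, ha01, ha⟩ := exists_mem_Ioo_notMem zero_lt_one
    ((finite_zeros_inter_compact hf hd ((isCompact_Icc (a := (0 : ℝ)) (b := 1)).prod
      (isCompact_Icc (a := -R) (b := R)))).image Prod.fst)
  have ha' (y : ℝ) : h.shooting k (a, y) ≠ 0 := fun e ↦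
    ha ⟨(a, y), ⟨⟨Ioo_subset_Icc_self ha01, Ioo_subset_Icc_self (hzero _ e)⟩, e⟩, rfl⟩
  exact ⟨a, -R, R, ha', hzero, even_ncard_boxZeros hf hd
    (fun x y ↦ by simpa using h.shooting_add_int k 1 x y) (by linarith) ha'
    (fun x ↦ hneg (x, -R) le_rfl) (fun x ↦ hpos (x, R) le_rfl)⟩

end IsPeriodicForce

section FundamentalSolutions

variable {V : ℝ → ℝ → ℝ} {T₀ M : ℝ} {L : ℝ≥0} {k₁ : ℤ} {k₂ : ℕ}

theorem eq_flow_of_mem_fundSolutions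
    (h : IsPeriodicForce (fun t ↦ deriv (V t)) (fun t ↦ deriv (deriv (V t))) (k₂ * T₀) M L)
    {x : ℝ → ℝ} (hx : x ∈ fundSolutions V T₀ k₁ k₂) :
    (fun t ↦ (x t, deriv x t)) = h.flow (x 0, deriv x 0) :=
  h.eq_flow (isIntegralCurve_of_contDiff hx.1 hx.2.1) rfl

theorem shooting_eq_zero_of_mem_fundSolutions
    (h : IsPeriodicForce (fun t ↦ deriv (V t)) (fun t ↦ deriv (deriv (V t))) (k₂ * T₀) M L)
    {x : ℝ → ℝ} (hx : x ∈ fundSolutions V T₀ k₁ k₂) :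
    h.shooting k₁ (x 0, deriv x 0) = 0 := by
  have hper := hx.2.2
  rw [h.shooting_eq_zero_iff, ← eq_flow_of_mem_fundSolutions h hx]
  refine Prod.ext ?_ ?_
  · simpa using hper 0
  · have : deriv x (0 + k₂ * T₀) = deriv x 0 := by
      rw [← deriv_comp_add_const, funext hper, deriv_add_const']
    simpa using this

theorem flow_fst_mem_fundSolutions
    (h : IsPeriodicForce (fun t ↦ deriv (V t)) (fun t ↦ deriv (deriv (V t))) (k₂ * T₀) M L)
    {p : ℝ × ℝ} (hp : h.shooting k₁ p = 0) :
    (fun t ↦ (h.flow p t).1) ∈ fundSolutions V T₀ k₁ k₂ := by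
  have hz := h.isIntegralCurve_flow p
  refine ⟨hz.contDiff_two_fst h.continuous, fun t ↦ ?_, fun t ↦ ?_⟩
  · rw [hz.deriv_deriv_fst, neg_add_cancel]
  · change (h.flow p (t + k₂ * T₀)).1 = _
    rw [h.flow_add_period_of_shooting hp]
    rfl

/-- Fundamental solutions modulo integer shifts correspond to zeros of the shooting map in a
fundamental domain. -/
theorem nonempty_quotient_fundSetoid_equiv
    (h : IsPeriodicForce (fun t ↦ deriv (V t)) (fun t ↦ deriv (deriv (V t))) (k₂ * T₀) M L)
    {a c d : ℝ} (ha : ∀ y, h.shooting k₁ (a, y) ≠ 0)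
    (hcd : ∀ p, h.shooting k₁ p = 0 → p.2 ∈ Ioo c d) :
    Nonempty (boxZeros (h.shooting k₁) a (a + 1) c d ≃ Quotient (fundSetoid V T₀ k₁ k₂)) := by
  refine ⟨Equiv.ofBijective (fun p ↦ Quotient.mk (fundSetoid V T₀ k₁ k₂)
    ⟨_, flow_fst_mem_fundSolutions h p.2.2⟩) ⟨?_, ?_⟩⟩
  · rintro ⟨p, hp, hp0⟩ ⟨q, hq, hq0⟩ hpq
    obtain ⟨m, hm⟩ := Quotient.exact hpq
    have hm' : (fun t ↦ (h.flow q t).1) = fun t ↦ (h.flow p t).1 + m := funext hm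
    have h1 : q.1 = p.1 + m := by simpa using hm 0
    have h2 : q.2 = p.2 := by
      have := congrFun (congrArg deriv hm') 0
      rw [deriv_add_const', (h.isIntegralCurve_flow q).deriv_fst,
        (h.isIntegralCurve_flow p).deriv_fst] at this
      simpa using this
    have hm0 : m = 0 := by
      have hp1 := hp.1
      have hq1 := hq.1
      rw [mem_Ioo] at hp1 hq1
      have h3 : (m : ℝ) < 1 := by linarith
      have h4 : (-1 : ℝ) < m := by linarith
      have h5 : m < 1 := by exact_mod_cast h3
      have h6 : -1 < m := by exact_mod_cast h4
      omega
    refine Subtype.ext (Prod.ext ?_ h2.symm)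
    simp [h1, hm0]
  · rintro ⟨x, hx⟩
    have hx0 := shooting_eq_zero_of_mem_fundSolutions h hx
    set m : ℤ := ⌊x 0 - a⌋ with hm
    have hp : (x 0, deriv x 0) = (x 0 - m + (m : ℤ), deriv x 0) := by simp
    have hp0 : h.shooting k₁ (x 0 - m, deriv x 0) = 0 := by
      rw [← h.shooting_add_int k₁ m, ← hp, hx0]
    have hle : a ≤ x 0 - m := by linarith [Int.floor_le (x 0 - a)]
    have hlt : x 0 - m < a + 1 := by linarith [Int.lt_floor_add_one (x 0 - a)]
    have hne : a ≠ x 0 - m := fun e ↦ ha (deriv x 0) (by rw [e, hp0])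
    refine ⟨⟨(x 0 - m, deriv x 0), ⟨⟨hle.lt_of_ne hne, hlt⟩, hcd _ hp0⟩, hp0⟩, ?_⟩
    refine Quotient.sound ⟨m, fun t ↦ ?_⟩
    have h1 := congrFun (eq_flow_of_mem_fundSolutions h hx) t
    rw [show (x 0, deriv x 0) = (x 0 - m, deriv x 0) + ((m : ℝ), 0) by simp,
      h.flow_add_int] at h1
    exact congrArg Prod.fst h1

end FundamentalSolutions

end

/-- if the equation is non-resonant, then for each rotation frequency
`ρ = k₁/(k₂T₀)` with `k₁, k₂` coprime, the number of fundamental solutions (counted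
in `S¹`, i.e. modulo integer shifts) equals `2r` for some integer `r ≥ 1`; in
particular it is finite, even and positive. -/
theorem fundamental_solutions_even_count (V : ℝ → ℝ → ℝ) (T₀ : ℝ) (hT₀ : 0 < T₀)
    (hV : ContDiff ℝ 2 (Function.uncurry V))
    (hVx : ∀ t y, V t (y + 1) = V t y)
    (hVt : ∀ t y, V (t + T₀) y = V t y)
    (hnonres : ∀ (x : ℝ → ℝ) (m₁ : ℤ) (m₂ : ℕ), 0 < m₂ → ContDiff ℝ 2 x →
      (∀ t, deriv (deriv x) t + deriv (V t) (x t) = 0) →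
      (∀ t, x (t + m₂ * T₀) = x t + m₁) →
      ∀ y : ℝ → ℝ, ContDiff ℝ 2 y →
        (∀ t, deriv (deriv y) t + deriv (deriv (V t)) (x t) * y t = 0) →
        (∀ t, y (t + m₂ * T₀) = y t) → y = 0)
    (k₁ : ℤ) (k₂ : ℕ) (hk₂ : 0 < k₂) (hcop : Nat.Coprime k₁.natAbs k₂) :
    ∃ r : ℕ, 1 ≤ r ∧
      Nat.card (Quotient (fundSetoid V T₀ k₁ k₂)) = 2 * r := by
  have hT : 0 < k₂ * T₀ := by positivity
  have hVT (t y : ℝ) : V (t + k₂ * T₀) y = V t y := by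
    have : Function.Periodic V T₀ := fun t ↦ funext (hVt t)
    rw [this.nat_mul k₂]
  obtain ⟨M, L, h⟩ := exists_isPeriodicForce hT hV hVx hVT
  obtain ⟨B, hB⟩ := exists_abs_le_of_periodic hV.continuous hT hVx hVT
  obtain ⟨p₀, hp₀⟩ := h.exists_shooting_eq_zero
    (fun t x ↦ hV.hasDerivAt_uncurry_snd two_ne_zero t x) hVx hB k₁
  have hd (p : ℝ × ℝ) (hp : h.shooting k₁ p = 0) : HasInjDeriv (h.shooting k₁) p :=
    h.hasInjDeriv_shooting_of_nonresonant
      (fun x hx hx' hper ↦ hnonres x k₁ k₂ hk₂ hx hx' hper) hp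
  obtain ⟨a, c, d, ha, hcd, hfin, r, hr⟩ := h.exists_box_even_ncard hd
  obtain ⟨e⟩ := nonempty_quotient_fundSetoid_equiv h ha hcd
  have hne : (boxZeros (h.shooting k₁) a (a + 1) c d).Nonempty :=
    ⟨_, (e.symm (Quotient.mk _ ⟨_, flow_fst_mem_fundSolutions h hp₀⟩)).2⟩
  have hpos := (Set.ncard_pos hfin).2 hne
  refine ⟨r, by omega, ?_⟩
  rw [← Nat.card_congr e, Nat.card_coe_set_eq, hr, two_mul]
end
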